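/- Under the standing assumptions, for every x ∈ X there exists r_x > 0 such that q(x,y) ≤ C_S · μ(B_{xy})^{1/2} for all y ∈ B_d(x,r_x), where C_S = 16 C_W C_D^{28+16⌈log₂ λ⌉}. -/

import Mathlib

open Metric MeasureTheory Set Filter Topology UniformSpace ENNReal
open scoped NNReal

noncomputable section

/-- The set `B_{xy} = B(x, d(x,y)) ∪ B(y, d(x,y))`. -/
def pairBall {X : Type*} [MetricSpace X] (x y : X) : Set X :=
  Metric.ball x (dist x y) ∪ Metric.ball y (dist x y)

/-- A `δ`-chain from `x` to `y`: a finite sequence `z 0 = x, …, z m = y` with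
consecutive distances at most `δ`. -/
def IsDeltaChain {X : Type*} [MetricSpace X] (δ : ℝ) (x y : X) (z : ℕ → X) (m : ℕ) : Prop :=
  z 0 = x ∧ z m = y ∧ ∀ j < m, dist (z j) (z (j + 1)) ≤ δ

/-- `q^δ_{μ,s}(x,y)`: infimum of `∑ μ(B_{x_j x_{j-1}})^{1/s}` over `δ`-chains from `x` to `y`. -/
def qDelta {X : Type*} [MetricSpace X] [MeasurableSpace X]
    (μ : Measure X) (s δ : ℝ) (x y : X) : ℝ≥0∞ :=
  ⨅ (m : ℕ) (z : ℕ → X) (_ : IsDeltaChain δ x y z m),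
    ∑ j ∈ Finset.range m, μ (pairBall (z j) (z (j + 1))) ^ (1 / s)

/-- `q_{μ,s}(x,y) = limsup_{δ → 0⁺} q^δ_{μ,s}(x,y)`. -/
def qmu {X : Type*} [MetricSpace X] [MeasurableSpace X]
    (μ : Measure X) (s : ℝ) (x y : X) : ℝ≥0∞ :=
  Filter.limsup (fun δ => qDelta μ s δ x y) (nhdsWithin (0 : ℝ) (Set.Ioi 0))

/-- `μ` is a doubling measure with constant `CD`: balls have positive finite measure and
`μ(B(x,2r)) ≤ CD · μ(B(x,r))`. -/
def IsDoublingWith {X : Type*} [MetricSpace X] [MeasurableSpace X]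
    (μ : Measure X) (CD : ℝ≥0) : Prop :=
  (∀ (x : X) (r : ℝ), 0 < r → 0 < μ (Metric.ball x r) ∧ μ (Metric.ball x r) < ⊤) ∧
    ∀ (x : X) (r : ℝ), 0 < r → μ (Metric.ball x (2 * r)) ≤ CD * μ (Metric.ball x r)

/-- `μ` is a `CW`-weak metric doubling measure of dimension `s`:
`μ(B_{xy})^{1/s} ≤ CW · q_{μ,s}(x,y)` for all `x, y`. -/
def IsWMDM {X : Type*} [MetricSpace X] [MeasurableSpace X]
    (μ : Measure X) (s : ℝ) (CW : ℝ≥0) : Prop :=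
  ∀ x y : X, μ (pairBall x y) ^ (1 / s) ≤ CW * qmu μ s x y

/-- A continuum is a compact connected set. -/
def IsContinuum {X : Type*} [TopologicalSpace X] (K : Set X) : Prop :=
  IsCompact K ∧ IsConnected K

/-- `X` is `λ`-linearly locally connected. -/
def IsLLC (X : Type*) [MetricSpace X] (lam : ℝ) : Prop :=
  ∀ (x : X) (r : ℝ), 0 < r →
    (∀ y ∈ Metric.ball x r, ∀ z ∈ Metric.ball x r,
      ∃ K : Set X, IsContinuum K ∧ K ⊆ Metric.ball x (lam * r) ∧ y ∈ K ∧ z ∈ K) ∧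
    (∀ y z : X, y ∉ Metric.ball x r → z ∉ Metric.ball x r →
      ∃ K : Set X, IsContinuum K ∧ K ⊆ (Metric.ball x (r / lam))ᶜ ∧ y ∈ K ∧ z ∈ K)

/-- The sphere `S²`, with the metric inherited from `ℝ³`. -/
abbrev Sphere2 : Set (EuclideanSpace ℝ (Fin 3)) := Metric.sphere 0 1

/-- A circle domain in `S²`: an open connected set each of whose complementary
connected components is a point or a round closed disk (a closed metric ball). -/
def IsCircleDomainS2 (Ω : Set ↥Sphere2) : Prop :=
  IsOpen Ω ∧ IsConnected Ω ∧ ∀ p ∈ Ωᶜ,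
    connectedComponentIn Ωᶜ p = {p} ∨
      ∃ (c : ↥Sphere2) (ρ : ℝ), 0 < ρ ∧ connectedComponentIn Ωᶜ p = Metric.closedBall c ρ

/-- A circle domain in the plane. -/
def IsCircleDomainC (Ω : Set ℂ) : Prop :=
  IsOpen Ω ∧ IsConnected Ω ∧ ∀ p ∈ Ωᶜ,
    connectedComponentIn Ωᶜ p = {p} ∨
      ∃ (c : ℂ) (ρ : ℝ), 0 < ρ ∧ connectedComponentIn Ωᶜ p = Metric.closedBall c ρ

/-- The residual set `X̄ ∖ X` inside the completion of `X`. -/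
def resid (X : Type*) [MetricSpace X] : Set (Completion X) :=
  (Set.range ((↑) : X → Completion X))ᶜ

/-- The collection of connected components of `X̄ ∖ X`. -/
def residComps (X : Type*) [MetricSpace X] : Set (Set (Completion X)) :=
  {C | ∃ p ∈ resid X, C = connectedComponentIn (resid X) p}

/-- Distance between two sets. -/
def setSetDist {Z : Type*} [MetricSpace Z] (A B : Set Z) : ℝ :=
  sInf (Set.image2 dist A B)

/-- `f` is `η`-quasisymmetric, for a homeomorphism `η` of `[0,∞)`. -/
def IsQSWith {X Y : Type*} [MetricSpace X] [MetricSpace Y]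
    (η : ℝ≥0 ≃ₜ ℝ≥0) (f : X → Y) : Prop :=
  ∀ x y z : X, x ≠ z →
    nndist (f x) (f y) ≤ η (nndist x y / nndist x z) * nndist (f x) (f z)

/-- `ℓ = ⌈log₂ λ⌉`. -/
def ellOf (lam : ℝ) : ℕ := (Int.ceil (Real.logb 2 lam)).toNat

/-- The constant `C_S = 16 C_W C_D^{28+16⌈log₂ λ⌉}`. -/
def CSconst (lam : ℝ) (CD CW : ℝ≥0) : ℝ≥0∞ :=
  16 * (CW : ℝ≥0∞) * (CD : ℝ≥0∞) ^ (28 + 16 * ellOf lam)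

/-- `K` separates `A` and `B`: `A` and `B` lie in different components of the complement of `K`. -/
def SeparatesSets {X : Type*} [TopologicalSpace X] (K A B : Set X) : Prop :=
  A ⊆ Kᶜ ∧ B ⊆ Kᶜ ∧
    ∀ p ∈ A, ∀ p' ∈ B, connectedComponentIn Kᶜ p ≠ connectedComponentIn Kᶜ p'

/-- A topological disk: a set homeomorphic to an open disk in the plane. -/
def IsTopDisk {X : Type*} [TopologicalSpace X] (U : Set X) : Prop :=
  Nonempty (↥U ≃ₜ ↥(Metric.ball (0 : ℂ) 1))

/-- Lower line integral `∫_γ ρ ds` over `γ : [a,b] → Y`, as a supremum of lower sums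
over partitions of `[a,b]`. -/
def lowerLineIntegral {Y : Type*} [PseudoEMetricSpace Y]
    (ρ : Y → ℝ≥0∞) (γ : ℝ → Y) (a b : ℝ) : ℝ≥0∞ :=
  ⨆ (n : ℕ) (t : ℕ → ℝ) (_ : t 0 = a) (_ : t n = b) (_ : ∀ j < n, t j ≤ t (j + 1)),
    ∑ j ∈ Finset.range n,
      (⨅ u ∈ Set.Icc (t j) (t (j + 1)), ρ (γ u)) * edist (γ (t j)) (γ (t (j + 1)))

/-- `γ` (with parameter interval `[0,1]`) is locally rectifiable on the open interval `(0,1)`. -/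
def LocRectifiableOn {Y : Type*} [PseudoEMetricSpace Y] (γ : ℝ → Y) : Prop :=
  ∀ c d : ℝ, 0 < c → c ≤ d → d < 1 → eVariationOn γ (Set.Icc c d) < ⊤

/-- The line integral of `ρ` over the open part of `γ`. -/
def openLineIntegral {Y : Type*} [PseudoEMetricSpace Y] (ρ : Y → ℝ≥0∞) (γ : ℝ → Y) : ℝ≥0∞ :=
  ⨆ (c : ℝ) (d : ℝ) (_ : 0 < c) (_ : c ≤ d) (_ : d < 1), lowerLineIntegral ρ γ c d

/-- `ρ` is admissible for the path family `Γ`. -/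
def IsAdmissible {Y : Type*} [PseudoEMetricSpace Y] (Γ : Set (ℝ → Y)) (ρ : Y → ℝ≥0∞) : Prop :=
  ∀ γ ∈ Γ, LocRectifiableOn γ → 1 ≤ openLineIntegral ρ γ

def borelSpaceBorel (Y : Type*) [TopologicalSpace Y] : @BorelSpace Y _ (borel Y) :=
  @BorelSpace.mk Y _ (borel Y) rfl

/-- The Hausdorff 2-measure of a metric space, normalized to coincide with Lebesgue measure
in the Euclidean plane. -/
def hausdorff2 (Y : Type*) [EMetricSpace Y] : @Measure Y (borel Y) :=
  ENNReal.ofReal (Real.pi / 4) •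
    @Measure.hausdorffMeasure Y _ (borel Y) (borelSpaceBorel Y) 2

/-- The conformal modulus of a path family in a metric space, with respect to the
(normalized) Hausdorff 2-measure. -/
def modulusH2 {Y : Type*} [EMetricSpace Y] (Γ : Set (ℝ → Y)) : ℝ≥0∞ :=
  ⨅ (ρ : Y → ℝ≥0∞) (_ : @Measurable Y ℝ≥0∞ (borel Y) _ ρ) (_ : IsAdmissible Γ ρ),
    @MeasureTheory.lintegral Y (borel Y) (hausdorff2 Y) fun y => ρ y ^ 2

/-- The conformal modulus of a path family in the plane, with respect to Lebesgue area measure. -/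
def modulusC (Γ : Set (ℝ → ℂ)) : ℝ≥0∞ :=
  ⨅ (ρ : ℂ → ℝ≥0∞) (_ : Measurable ρ) (_ : IsAdmissible Γ ρ), ∫⁻ z, ρ z ^ 2

/-- A homeomorphism between metric spaces is `K`-quasiconformal if it distorts moduli of
path families by a factor of at most `K` in both directions. -/
def IsQCWith {Y Z : Type*} [EMetricSpace Y] [EMetricSpace Z] (K : ℝ≥0∞) (f : Y ≃ₜ Z) : Prop :=
  ∀ Γ : Set (ℝ → Y),
    modulusH2 ((fun γ => (f : Y → Z) ∘ γ) '' Γ) ≤ K * modulusH2 Γ ∧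
      modulusH2 Γ ≤ K * modulusH2 ((fun γ => (f : Y → Z) ∘ γ) '' Γ)

/-- The family `Γ(A,B;G)` of paths joining `A` and `B` in `G` (parameter interval `[0,1]`). -/
def joinPaths (A B G : Set ℂ) : Set (ℝ → ℂ) :=
  {γ | ContinuousOn γ (Set.Icc 0 1) ∧ γ 0 ∈ A ∧ γ 1 ∈ B ∧
    γ 0 ∈ closure G ∧ γ 1 ∈ closure G ∧ ∀ u ∈ Set.Ioo (0 : ℝ) 1, γ u ∈ G}

/-- The constant `α = 2^{−2−2M−π²C_W²C_D^{1+log₂ C_X}/(8 log 2)}`. -/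
def alphaConst (M : ℕ) (CD CW : ℝ≥0) (CX : ℝ) : ℝ :=
  (2 : ℝ) ^ (-2 - 2 * (M : ℝ) -
    Real.pi ^ 2 * (CW : ℝ) ^ 2 * (CD : ℝ) ^ ((1 : ℝ) + Real.logb 2 CX) / (8 * Real.log 2))


/-- `z - a` has a continuous logarithm on `K`. -/
def HasLg (K : Set ℂ) (a : ℂ) : Prop :=
  ∃ g : ℂ → ℂ, ContinuousOn g K ∧ ∀ z ∈ K, Complex.exp (g z) = z - a

theorem HasLg.move {K : Set ℂ} {a b : ℂ} (h : HasLg K a)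
    (hab : ∀ z ∈ K, ‖b - a‖ < ‖z - a‖) : HasLg K b := by
  obtain ⟨g, hg, he⟩ := h
  have hne : ∀ z ∈ K, z - a ≠ 0 := by
    intro z hz h0
    have := hab z hz
    rw [h0, norm_zero] at this
    exact absurd this (not_lt.2 (norm_nonneg _))
  have hsl : ∀ z ∈ K, 1 - (b - a) / (z - a) ∈ Complex.slitPlane := by
    intro z hz
    have h1 : ‖(b - a) / (z - a)‖ < 1 := by
      rw [norm_div, div_lt_one (norm_pos_iff.2 (hne z hz))]
      exact hab z hz
    left
    have h2 := Complex.re_le_norm ((b - a) / (z - a))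
    simp only [Complex.sub_re, Complex.one_re]
    linarith
  refine ⟨fun z => g z + Complex.log (1 - (b - a) / (z - a)), ?_, ?_⟩
  · refine hg.add (ContinuousOn.clog ?_ hsl)
    exact continuousOn_const.sub (continuousOn_const.div (by fun_prop) hne)
  · intro z hz
    rw [Complex.exp_add, he z hz, Complex.exp_log (Complex.slitPlane_ne_zero (hsl z hz))]
    field_simp [hne z hz]
    ring

theorem HasLg.far {K : Set ℂ} {r : ℝ} (hK : K ⊆ closedBall 0 r) {b : ℂ} (hb : r < ‖b‖) :
    HasLg K b := by
  have hb0 : ∀ z ∈ K, ‖z‖ < ‖b‖ := fun z hz => by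
    have := hK hz
    rw [mem_closedBall_zero_iff] at this
    linarith
  by_cases hKe : K = ∅
  · subst hKe; exact ⟨0, by simp, by simp⟩
  obtain ⟨z0, hz0⟩ := Set.nonempty_iff_ne_empty.2 hKe
  have hbne : b ≠ 0 := by
    intro h; have := hb0 z0 hz0; rw [h, norm_zero] at this
    exact absurd this (not_lt.2 (norm_nonneg _))
  have hsl : ∀ z ∈ K, 1 - z / b ∈ Complex.slitPlane := by
    intro z hz
    have h1 : ‖z / b‖ < 1 := by
      rw [norm_div, div_lt_one (norm_pos_iff.2 hbne)]
      exact hb0 z hz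
    left
    have h2 := Complex.re_le_norm (z / b)
    simp only [Complex.sub_re, Complex.one_re]
    linarith
  refine ⟨fun z => Complex.log (-b) + Complex.log (1 - z / b), ?_, ?_⟩
  · exact continuousOn_const.add (ContinuousOn.clog (by fun_prop) hsl)
  · intro z hz
    rw [Complex.exp_add, Complex.exp_log (neg_ne_zero.2 hbne),
      Complex.exp_log (Complex.slitPlane_ne_zero (hsl z hz))]
    field_simp
    ring

theorem HasLg.of_unbounded {K : Set ℂ} (hK : IsCompact K) {a : ℂ} (ha : a ∉ K)
    (hub : ¬ Bornology.IsBounded (connectedComponentIn Kᶜ a)) : HasLg K a := by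
  obtain ⟨r, hr⟩ := hK.isBounded.subset_closedBall 0
  obtain ⟨b, hbC, hb⟩ : ∃ b ∈ connectedComponentIn Kᶜ a, r < ‖b‖ := by
    by_contra hcon
    push Not at hcon
    exact hub (isBounded_closedBall.subset (fun z hz => mem_closedBall_zero_iff.2 (hcon z hz)))
  have hfar := HasLg.far hr hb
  set C := connectedComponentIn Kᶜ a
  have hCpre : IsPreconnected C := isPreconnected_connectedComponentIn
  have hCsub : C ⊆ Kᶜ := connectedComponentIn_subset _ _
  have key : ∀ c ∉ K, ∃ e > 0, ∀ c', dist c' c < e → (HasLg K c ↔ HasLg K c') := by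
    intro c hc
    obtain ⟨e, he, hsub⟩ := Metric.isOpen_iff.1 hK.isClosed.isOpen_compl c hc
    have hz : ∀ z ∈ K, e ≤ ‖z - c‖ := by
      intro z hzK
      by_contra hlt
      push Not at hlt
      exact hsub (by rw [mem_ball, dist_eq_norm]; exact hlt) hzK
    refine ⟨e / 2, by positivity, fun c' hc' => ?_⟩
    rw [dist_eq_norm] at hc'
    refine ⟨fun h => h.move (fun z hzK => by linarith [hz z hzK]), fun h => h.move (fun z hzK => ?_)⟩
    have h1 : ‖z - c‖ ≤ ‖z - c'‖ + ‖c' - c‖ := by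
      have := norm_add_le (z - c') (c' - c); simpa using this
    rw [norm_sub_rev] 
    linarith [hz z hzK]
  set U := {c | c ∈ Kᶜ ∧ HasLg K c}
  set W := {c | c ∈ Kᶜ ∧ ¬ HasLg K c}
  have hUo : IsOpen U := by
    rw [Metric.isOpen_iff]
    rintro c ⟨hc, hl⟩
    obtain ⟨e, he, h⟩ := key c hc
    obtain ⟨e', he', h'⟩ := Metric.isOpen_iff.1 hK.isClosed.isOpen_compl c hc
    refine ⟨min e e', lt_min he he', fun c' hc' => ⟨h' ?_, (h c' ?_).1 hl⟩⟩
    · exact ball_subset_ball (min_le_right _ _) hc'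
    · exact lt_of_lt_of_le hc' (min_le_left _ _)
  have hWo : IsOpen W := by
    rw [Metric.isOpen_iff]
    rintro c ⟨hc, hl⟩
    obtain ⟨e, he, h⟩ := key c hc
    obtain ⟨e', he', h'⟩ := Metric.isOpen_iff.1 hK.isClosed.isOpen_compl c hc
    refine ⟨min e e', lt_min he he', fun c' hc' => ⟨h' ?_, fun hh => hl ((h c' ?_).2 hh)⟩⟩
    · exact ball_subset_ball (min_le_right _ _) hc'
    · exact lt_of_lt_of_le hc' (min_le_left _ _)
  by_contra hna
  have haC : a ∈ C := mem_connectedComponentIn ha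
  obtain ⟨c, -, h1, h2⟩ := hCpre U W hUo hWo (fun c hc => by
      by_cases h : HasLg K c
      · exact Or.inl ⟨hCsub hc, h⟩
      · exact Or.inr ⟨hCsub hc, h⟩)
    ⟨b, hbC, hCsub hbC, hfar⟩ ⟨a, haC, ha, hna⟩
  exact h2.2 h1.2

theorem HasLg.union {K₁ K₂ : Set ℂ} {a : ℂ} (h₁ : HasLg K₁ a) (h₂ : HasLg K₂ a)
    (hc₁ : IsClosed K₁) (hc₂ : IsClosed K₂) (hd : Disjoint K₁ K₂) : HasLg (K₁ ∪ K₂) a := by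
  classical
  obtain ⟨g₁, hg₁, he₁⟩ := h₁
  obtain ⟨g₂, hg₂, he₂⟩ := h₂
  have e1 : ∀ z ∈ K₁, K₁.piecewise g₁ g₂ z = g₁ z := fun z hz => piecewise_eq_of_mem _ _ _ hz
  have e2 : ∀ z ∈ K₂, K₁.piecewise g₁ g₂ z = g₂ z := fun z hz =>
    piecewise_eq_of_notMem _ _ _ (fun h => Set.disjoint_left.1 hd h hz)
  refine ⟨K₁.piecewise g₁ g₂, ?_, ?_⟩
  · exact (hg₁.congr e1).union_of_isClosed (hg₂.congr e2) hc₁ hc₂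
  · rintro z (hz | hz)
    · rw [e1 z hz, he₁ z hz]
    · rw [e2 z hz, he₂ z hz]

theorem no_lg_of_surround {K V : Set ℂ} {a : ℂ} (hK : IsClosed K) (hV : IsOpen V)
    (hVb : Bornology.IsBounded V) (haV : a ∈ V) (hfr : frontier V ⊆ K) : ¬ HasLg K a := by
  classical
  rintro ⟨g, hg, he⟩
  obtain ⟨G, hG⟩ := ContinuousMap.exists_restrict_eq hK
    (⟨K.domRestrict g, continuousOn_iff_continuous_domRestrict.1 hg⟩ : C(K, ℂ))
  have hG' : ∀ z ∈ K, G z = g z := fun z hz => by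
    have := congrArg (fun f : C(K, ℂ) => f ⟨z, hz⟩) hG
    exact this
  let h : ℂ → ℂ := V.piecewise (fun z => Complex.exp (G z)) (fun z => z - a)
  have hcont : Continuous h := by
    refine Continuous.piecewise ?_ (by fun_prop) (by fun_prop)
    intro z hz
    rw [hG' z (hfr hz), he z (hfr hz)]
  have hne : ∀ z, h z ≠ 0 := by
    intro z
    by_cases hz : z ∈ V
    · simp only [h, piecewise_eq_of_mem _ _ _ hz]; exact Complex.exp_ne_zero _
    · simp only [h, piecewise_eq_of_notMem _ _ _ hz]
      intro h0
      exact hz (by rw [sub_eq_zero.1 h0]; exact haV)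
  obtain ⟨H, ⟨-, hH⟩, -⟩ := Complex.isCoveringMapOn_exp.existsUnique_continuousMap_lifts
    (⟨h, hcont⟩ : C(ℂ, ℂ)) (a₀ := 0) (e₀ := Complex.log (h 0)) (Complex.exp_log (hne 0))
    (fun z => hne z)
  have hH' : ∀ z, Complex.exp (H z) = h z := fun z => congrFun hH z
  obtain ⟨r, hr⟩ := hVb.subset_closedBall a
  set ρ := max r 0 + 1 with hρ
  have hρ0 : 0 < ρ := by positivity
  have hρr : r < ρ := by have := le_max_left r 0; linarith
  let c : ℝ → ℂ := fun t => a + ρ * Complex.exp (t * Complex.I)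
  have hcV : ∀ t, c t ∉ V := by
    intro t ht
    have := hr ht
    rw [mem_closedBall, dist_eq_norm] at this
    simp only [c, add_sub_cancel_left, norm_mul, Complex.norm_exp_ofReal_mul_I, mul_one,
      Complex.norm_real, Real.norm_eq_abs, abs_of_pos hρ0] at this
    linarith
  have hval : ∀ t : ℝ, Complex.exp (H (c t)) = ρ * Complex.exp (t * Complex.I) := by
    intro t
    rw [hH']
    simp only [h, piecewise_eq_of_notMem _ _ _ (hcV t), c, add_sub_cancel_left]
  have hu := Complex.isCoveringMapOn_exp.existsUnique_continuousMap_lifts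
    (⟨fun _ => (ρ : ℂ), continuous_const⟩ : C(ℝ, ℂ)) (a₀ := 0) (e₀ := H (c 0))
    (by simp [hval]) (fun _ => by simpa using hρ0.ne')
  have hF : Continuous (fun t : ℝ => H (c t) - t * Complex.I) := by
    have : Continuous c := by fun_prop
    exact (H.continuous.comp this).sub (by fun_prop)
  have heq := hu.unique (y₁ := ⟨fun t : ℝ => H (c t) - t * Complex.I, hF⟩)
    (y₂ := ⟨fun _ => H (c 0), continuous_const⟩)
    ⟨by simp, by
      funext t
      simp only [Function.comp, ContinuousMap.coe_mk, Complex.exp_sub, hval]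
      field_simp [Complex.exp_ne_zero]⟩
    ⟨rfl, by funext t; simp [hval]⟩
  have h2 := congrArg (fun f : C(ℝ, ℂ) => f (2 * Real.pi)) heq
  have hcc : c (2 * Real.pi) = c 0 := by
    simp [c]
  simp only [ContinuousMap.coe_mk, hcc] at h2
  have : (((2 * Real.pi : ℝ) : ℂ)) * Complex.I = 0 := by linear_combination -h2
  simp [Complex.I_ne_zero, Real.pi_ne_zero] at this

theorem frontier_cc_subset {K : Set ℂ} (hK : IsClosed K) (a : ℂ) :
    frontier (connectedComponentIn Kᶜ a) ⊆ K := by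
  intro z hz
  by_contra hzK
  have ho : IsOpen (connectedComponentIn Kᶜ a) := hK.isOpen_compl.connectedComponentIn
  rw [ho.frontier_eq] at hz
  have ho2 : IsOpen (connectedComponentIn Kᶜ z) := hK.isOpen_compl.connectedComponentIn
  have hzz : z ∈ connectedComponentIn Kᶜ z := mem_connectedComponentIn hzK
  obtain ⟨w, hw1, hw2⟩ := mem_closure_iff.1 hz.1 _ ho2 hzz
  have e1 := connectedComponentIn_eq hw1
  have e2 := connectedComponentIn_eq hw2
  exact hz.2 (by rw [e2, ← e1]; exact hzz)

theorem planar_sep {𝒦 : Set (Set ℂ)} (hfin : 𝒦.Finite) (hcpt : ∀ K ∈ 𝒦, IsCompact K)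
    (hdis : 𝒦.PairwiseDisjoint id) {V : Set ℂ} {a : ℂ} (hV : IsOpen V)
    (hVb : Bornology.IsBounded V) (haV : a ∈ V) (haK : ∀ K ∈ 𝒦, a ∉ K)
    (hfr : frontier V ⊆ ⋃₀ 𝒦) :
    ∃ K ∈ 𝒦, ∃ V' : Set ℂ, IsOpen V' ∧ Bornology.IsBounded V' ∧ a ∈ V' ∧ frontier V' ⊆ K := by
  by_contra hcon
  push Not at hcon
  have hlg : ∀ K ∈ 𝒦, HasLg K a := by
    intro K hK
    refine HasLg.of_unbounded (hcpt K hK) (haK K hK) (fun hb => ?_)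
    exact hcon K hK _ (hcpt K hK).isClosed.isOpen_compl.connectedComponentIn hb
      (mem_connectedComponentIn (haK K hK)) (frontier_cc_subset (hcpt K hK).isClosed a)
  have main : ∀ S : Set (Set ℂ), S.Finite → S ⊆ 𝒦 → HasLg (⋃₀ S) a := by
    intro S hS
    induction S, hS using Set.Finite.induction_on with
    | empty => intro _; exact ⟨0, by simp, by simp⟩
    | @insert K S hKS hSf ih =>
      intro hsub
      rw [sUnion_insert]
      have hS' : S ⊆ 𝒦 := (subset_insert _ _).trans hsub
      refine HasLg.union (hlg K (hsub (mem_insert _ _))) (ih hS')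
        (hcpt K (hsub (mem_insert _ _))).isClosed
        (sUnion_eq_biUnion (s := S) ▸ hSf.isClosed_biUnion (fun t ht => (hcpt t (hS' ht)).isClosed)) ?_
      rw [disjoint_sUnion_right]
      intro t ht
      exact hdis (hsub (mem_insert _ _)) (hS' ht) (fun h => hKS (h ▸ ht))
  exact no_lg_of_surround (sUnion_eq_biUnion (s := 𝒦) ▸ hfin.isClosed_biUnion (fun t ht => (hcpt t ht).isClosed)) hV hVb haV hfr
    (main 𝒦 hfin le_rfl)


theorem hits_frontier {X : Type*} [TopologicalSpace X] {C V : Set X} (hC : IsPreconnected C)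
    (hV : IsOpen V) {a b : X} (haC : a ∈ C) (haV : a ∈ V) (hbC : b ∈ C) (hbV : b ∉ V) :
    ∃ z ∈ C, z ∈ frontier V := by
  by_contra hcon
  push Not at hcon
  obtain ⟨z, -, h1, h2⟩ := hC V (closure V)ᶜ hV isClosed_closure.isOpen_compl (fun z hz => by
    by_cases h : z ∈ V
    · exact Or.inl h
    · right
      intro hcl
      exact hcon z hz (by rw [hV.frontier_eq]; exact ⟨hcl, h⟩)) ⟨a, haC, haV⟩
    ⟨b, hbC, fun hcl => hcon b hbC (by rw [hV.frontier_eq]; exact ⟨hcl, hbV⟩)⟩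
  exact h2 (subset_closure h1)

theorem exists_chart {X : Type*} [MetricSpace X]
    (hhom : ∃ Ω₀ : Set ↥Sphere2, IsCircleDomainS2 Ω₀ ∧ Nonempty (X ≃ₜ ↥Ω₀)) (x0 : X) :
    ∃ ψ : OpenPartialHomeomorph X ℂ, x0 ∈ ψ.source := by
  obtain ⟨Ω, hΩ, ⟨f⟩⟩ := hhom
  have : Nonempty X := ⟨x0⟩
  have hoe : IsOpenEmbedding (fun x : X => ((f x : ↥Ω) : ↥Sphere2)) :=
    hΩ.1.isOpenEmbedding_subtypeVal.comp f.isOpenEmbedding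
  let e1 := hoe.toOpenPartialHomeomorph
  let e2 : OpenPartialHomeomorph ↥Sphere2 (EuclideanSpace ℝ (Fin 2)) :=
    chartAt (EuclideanSpace ℝ (Fin 2)) ((f x0 : ↥Ω) : ↥Sphere2)
  let e3 := Complex.orthonormalBasisOneI.repr.symm.toHomeomorph.toOpenPartialHomeomorph
  refine ⟨(e1.trans e2).trans e3, ?_⟩
  simp only [OpenPartialHomeomorph.trans_source, mem_inter_iff, mem_preimage]
  refine ⟨⟨by simp [e1], ?_⟩, by simp [e3]⟩
  exact mem_chart_source (EuclideanSpace ℝ (Fin 2)) ((f x0 : ↥Ω) : ↥Sphere2)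

/-- The planar separation property near a point. -/
def PSep {X : Type*} [MetricSpace X] (Kc : Set X) (b : X) : Prop :=
  ∀ (𝒦 : Set (Set X)), 𝒦.Finite → (∀ K ∈ 𝒦, IsCompact K) → (∀ K ∈ 𝒦, K ⊆ Kc) →
    𝒦.PairwiseDisjoint id → ∀ (V : Set X) (a : X), IsOpen V → V ⊆ Kc → a ∈ V →
    (∀ K ∈ 𝒦, a ∉ K) → frontier V ⊆ ⋃₀ 𝒦 →
    ∃ K ∈ 𝒦, ∃ V' : Set X, IsOpen V' ∧ a ∈ V' ∧ b ∉ V' ∧ frontier V' ⊆ K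

theorem frontier_image_subset {X Y : Type*} [MetricSpace X] [MetricSpace Y]
    (ψ : OpenPartialHomeomorph X Y) {V : Set X} {Kc : Set X} (hKc : IsCompact Kc)
    (hKs : Kc ⊆ ψ.source) (hV : IsOpen V) (hVK : V ⊆ Kc) :
    IsOpen (ψ '' V) ∧ frontier (ψ '' V) ⊆ ψ '' (frontier V) := by
  have ho : IsOpen (ψ '' V) := ψ.isOpen_image_of_subset_source hV (hVK.trans hKs)
  refine ⟨ho, fun z hz => ?_⟩
  rw [ho.frontier_eq] at hz
  have hclK : closure V ⊆ Kc := closure_minimal hVK hKc.isClosed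
  have hcc : IsCompact (closure V) := hKc.of_isClosed_subset isClosed_closure hclK
  have hci : IsCompact (ψ '' closure V) :=
    hcc.image_of_continuousOn (ψ.continuousOn.mono (hclK.trans hKs))
  have : z ∈ ψ '' closure V := closure_minimal (image_mono subset_closure) hci.isClosed hz.1
  obtain ⟨v, hv, rfl⟩ := this
  refine ⟨v, ?_, rfl⟩
  rw [hV.frontier_eq]
  exact ⟨hv, fun hvV => hz.2 ⟨v, hvV, rfl⟩⟩

theorem exists_setup {X : Type*} [MetricSpace X]
    (hhom : ∃ Ω₀ : Set ↥Sphere2, IsCircleDomainS2 Ω₀ ∧ Nonempty (X ≃ₜ ↥Ω₀)) (x0 : X) :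
    ∃ ρ > 0, ∃ b : X, IsCompact (closedBall x0 ρ) ∧ ρ < dist x0 b ∧ PSep (closedBall x0 ρ) b := by
  obtain ⟨ψ, hx⟩ := exists_chart hhom x0
  set c := ψ x0 with hc
  have hct : c ∈ ψ.target := ψ.map_source hx
  obtain ⟨τ, hτ, hball⟩ := Metric.isOpen_iff.1 ψ.open_target c hct
  have hcl : closedBall c (τ / 2) ⊆ ψ.target :=
    (closedBall_subset_ball (by linarith)).trans hball
  have hcomp : IsCompact (ψ.symm '' closedBall c (τ / 2)) :=
    (isCompact_closedBall c (τ / 2)).image_of_continuousOn (ψ.symm.continuousOn.mono hcl)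
  have hopen : IsOpen (ψ.symm '' Metric.ball c (τ / 2)) :=
    ψ.symm.isOpen_image_of_subset_source isOpen_ball
      (ball_subset_closedBall.trans hcl)
  have hx0 : x0 ∈ ψ.symm '' Metric.ball c (τ / 2) :=
    ⟨c, mem_ball_self (by positivity), ψ.left_inv hx⟩
  obtain ⟨ρ', hρ', hsub'⟩ := Metric.isOpen_iff.1 hopen x0 hx0
  have hsub : closedBall x0 (ρ' / 2) ⊆ ψ.symm '' Metric.ball c (τ / 2) :=
    (closedBall_subset_ball (by linarith)).trans hsub'
  have hcpt : IsCompact (closedBall x0 (ρ' / 2)) :=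
    hcomp.of_isClosed_subset isClosed_closedBall (hsub.trans (image_mono ball_subset_closedBall))
  have hsrc : closedBall x0 (ρ' / 2) ⊆ ψ.source := by
    intro z hz
    obtain ⟨w, hw, rfl⟩ := hsub hz
    exact ψ.map_target (hcl (ball_subset_closedBall hw))
  have himg : ∀ z ∈ closedBall x0 (ρ' / 2), ψ z ∈ Metric.ball c (τ / 2) := by
    intro z hz
    obtain ⟨w, hw, rfl⟩ := hsub hz
    rwa [ψ.right_inv (hcl (ball_subset_closedBall hw))]
  set b0 : ℂ := c + ((3 * τ / 4 : ℝ) : ℂ) with hb0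
  have hb0d : dist b0 c = 3 * τ / 4 := by
    rw [dist_eq_norm, hb0, add_sub_cancel_left, Complex.norm_real, Real.norm_eq_abs,
      abs_of_pos (by positivity)]
  have hb0t : b0 ∈ ψ.target := hball (by rw [mem_ball, hb0d]; linarith)
  refine ⟨ρ' / 2, by positivity, ψ.symm b0, hcpt, ?_, ?_⟩
  · by_contra hle
    push Not at hle
    have := himg (ψ.symm b0) (by rw [mem_closedBall, dist_comm]; exact hle)
    rw [ψ.right_inv hb0t, mem_ball, hb0d] at this
    linarith
  · intro 𝒦 hfin hKc hKs hdis V a hV hVK haV haK hfr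
    obtain ⟨hVo, hVf⟩ := frontier_image_subset ψ hcpt hsrc hV hVK
    have hres := planar_sep (𝒦 := (fun K => ψ '' K) '' 𝒦) (hfin.image _) ?_ ?_
      (V := ψ '' V) (a := ψ a) hVo ?_ ⟨a, haV, rfl⟩ ?_ ?_
    · obtain ⟨_, ⟨K, hK, rfl⟩, V', hV'o, hV'b, haV', hV'f⟩ := hres
      have hfrb : frontier V' ⊆ Metric.ball c (τ / 2) := by
        intro z hz
        obtain ⟨w, hw, rfl⟩ := hV'f hz
        exact himg w (hKs K hK hw)
      have hV'c : V' ⊆ closedBall c (τ / 2) := by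
        intro z hz
        by_contra hzc
        rw [mem_closedBall, not_le, dist_eq_norm] at hzc
        obtain ⟨r, hr⟩ := hV'b.subset_closedBall c
        let γ : ℝ → ℂ := fun t => c + (t : ℂ) * (z - c)
        have hγ : IsPreconnected (γ '' Ici 1) :=
          isPreconnected_Ici.image _ (by fun_prop)
        have hnorm : ∀ t, 1 ≤ t → t * (τ / 2) ≤ dist (γ t) c := by
          intro t ht
          simp only [γ, dist_eq_norm, add_sub_cancel_left, norm_mul, Complex.norm_real,
            Real.norm_eq_abs, abs_of_pos (lt_of_lt_of_le one_pos ht)]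
          exact mul_le_mul_of_nonneg_left hzc.le (by linarith)
        set t0 := max 1 (2 * (r + 1) / τ) with ht0
        have hfar : γ t0 ∉ V' := by
          intro hin
          have h1 := hnorm t0 (le_max_left _ _)
          have h2 : dist (γ t0) c ≤ r := hr hin
          have h3 : 2 * (r + 1) / τ ≤ t0 := le_max_right _ _
          have h4 : 2 * (r + 1) / τ * (τ / 2) = r + 1 := by field_simp
          have h5 : 2 * (r + 1) / τ * (τ / 2) ≤ t0 * (τ / 2) :=
            mul_le_mul_of_nonneg_right h3 (by positivity)
          linarith
        obtain ⟨w, ⟨t, ht, rfl⟩, hw⟩ := hits_frontier hγ hV'o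
          (a := z) ⟨1, by simp, by simp [γ]⟩ hz ⟨t0, mem_Ici.2 (le_max_left _ _), rfl⟩ hfar
        have h1 := hnorm t ht
        have h2 := hfrb hw
        rw [mem_ball] at h2
        have h3 : 1 * (τ / 2) ≤ t * (τ / 2) := mul_le_mul_of_nonneg_right ht (by positivity)
        linarith
      obtain ⟨hWo, hWf⟩ := frontier_image_subset ψ.symm (isCompact_closedBall c (τ / 2)) hcl
        hV'o hV'c
      refine ⟨K, hK, ψ.symm '' V', hWo, ⟨ψ a, haV', ψ.left_inv (hsrc (hVK haV))⟩, ?_, ?_⟩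
      · rintro ⟨w, hw, hwb⟩
        have hwe : w = b0 := ψ.symm.injOn (hcl (hV'c hw)) hb0t hwb
        have := hV'c hw
        rw [hwe, mem_closedBall, hb0d] at this
        linarith
      · intro z hz
        obtain ⟨w, hw, rfl⟩ := hWf hz
        obtain ⟨k, hk, rfl⟩ := hV'f hw
        rwa [ψ.left_inv (hsrc (hKs K hK hk))]
    · rintro _ ⟨K, hK, rfl⟩
      exact (hKc K hK).image_of_continuousOn (ψ.continuousOn.mono ((hKs K hK).trans hsrc))
    · rintro _ ⟨K, hK, rfl⟩ _ ⟨K', hK', rfl⟩ hne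
      have hne' : K ≠ K' := fun h => hne (by rw [h])
      have hd := hdis hK hK' hne'
      simp only [Function.onFun, id] at hd ⊢
      rw [Set.disjoint_left] at hd ⊢
      rintro _ ⟨z, hz, rfl⟩ ⟨z', hz', he⟩
      have := ψ.injOn (hsrc (hKs K' hK' hz')) (hsrc (hKs K hK hz)) he
      exact hd hz (this ▸ hz')
    · exact isBounded_ball.subset (by rintro _ ⟨z, hz, rfl⟩; exact himg z (hVK hz))
    · rintro _ ⟨K, hK, rfl⟩ ⟨z, hz, he⟩
      have := ψ.injOn (hsrc (hKs K hK hz)) (hsrc (hVK haV)) he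
      exact haK K hK (this ▸ hz)
    · intro z hz
      obtain ⟨w, hw, rfl⟩ := hVf hz
      obtain ⟨K, hK, hwK⟩ := hfr hw
      exact ⟨_, ⟨K, hK, rfl⟩, w, hwK, rfl⟩


/-- Square root of the measure of a ball. -/
def wt {X : Type*} [MetricSpace X] [MeasurableSpace X] (μ : Measure X) (z : X) (r : ℝ) : ℝ≥0∞ :=
  μ (Metric.ball z r) ^ (1 / 2 : ℝ)

/-- Square root of the measure of the pair ball. -/
def pc {X : Type*} [MetricSpace X] [MeasurableSpace X] (μ : Measure X) (a b : X) : ℝ≥0∞ :=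
  μ (pairBall a b) ^ (1 / 2 : ℝ)

theorem one_le_CD {X : Type*} [MetricSpace X] [MeasurableSpace X] {μ : Measure X} {CD : ℝ≥0}
    (hd : IsDoublingWith μ CD) (x : X) : (1 : ℝ≥0∞) ≤ CD := by
  have h1 := hd.2 x 1 one_pos
  obtain ⟨h2, h3⟩ := hd.1 x 1 one_pos
  have h4 : μ (Metric.ball x 1) ≤ μ (Metric.ball x (2 * 1)) :=
    measure_mono (ball_subset_ball (by norm_num))
  have h5 : 1 * μ (Metric.ball x 1) ≤ CD * μ (Metric.ball x 1) := by
    rw [one_mul]; exact h4.trans h1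
  exact (ENNReal.mul_le_mul_iff_left h2.ne' h3.ne).1 h5

theorem wt_mono {X : Type*} [MetricSpace X] [MeasurableSpace X] {μ : Measure X}
    {z z' : X} {r r' : ℝ} (h : dist z z' + r ≤ r') : wt μ z r ≤ wt μ z' r' :=
  ENNReal.rpow_le_rpow (measure_mono (ball_subset_ball' (by linarith))) (by norm_num)

theorem wt_pos {X : Type*} [MetricSpace X] [MeasurableSpace X] {μ : Measure X} {CD : ℝ≥0}
    (hd : IsDoublingWith μ CD) (z : X) {r : ℝ} (hr : 0 < r) : 0 < wt μ z r :=
  ENNReal.rpow_pos (hd.1 z r hr).1 (hd.1 z r hr).2.ne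

theorem wt_ne_top {X : Type*} [MetricSpace X] [MeasurableSpace X] {μ : Measure X} {CD : ℝ≥0}
    (hd : IsDoublingWith μ CD) (z : X) {r : ℝ} (hr : 0 < r) : wt μ z r ≠ ⊤ :=
  ENNReal.rpow_ne_top_of_nonneg (by norm_num) (hd.1 z r hr).2.ne

theorem wt_sq {X : Type*} [MetricSpace X] [MeasurableSpace X] (μ : Measure X)
    (z : X) (r : ℝ) : wt μ z r * wt μ z r = μ (Metric.ball z r) := by
  rw [wt, ← ENNReal.rpow_add_of_nonneg _ _ (by norm_num) (by norm_num)]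
  norm_num

theorem wt_four {X : Type*} [MetricSpace X] [MeasurableSpace X] {μ : Measure X} {CD : ℝ≥0}
    (hd : IsDoublingWith μ CD) (z : X) {r : ℝ} (hr : 0 < r) :
    wt μ z (4 * r) ≤ CD * wt μ z r := by
  have h1 := hd.2 z r hr
  have h2 := hd.2 z (2 * r) (by linarith)
  have h3 : μ (Metric.ball z (4 * r)) ≤ CD ^ 2 * μ (Metric.ball z r) := by
    calc μ (Metric.ball z (4 * r)) = μ (Metric.ball z (2 * (2 * r))) := by ring_nf
      _ ≤ CD * (CD * μ (Metric.ball z r)) := h2.trans (by gcongr)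
      _ = _ := by ring
  calc wt μ z (4 * r) ≤ (CD ^ 2 * μ (Metric.ball z r)) ^ (1 / 2 : ℝ) :=
        ENNReal.rpow_le_rpow h3 (by norm_num)
    _ = CD * wt μ z r := by
        rw [ENNReal.mul_rpow_of_nonneg _ _ (by norm_num), ← ENNReal.rpow_natCast,
          ← ENNReal.rpow_mul]
        norm_num [wt]

theorem wt_pow {X : Type*} [MetricSpace X] [MeasurableSpace X] {μ : Measure X} {CD : ℝ≥0}
    (hd : IsDoublingWith μ CD) (z : X) {r : ℝ} (hr : 0 < r) (n : ℕ) :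
    wt μ z (4 ^ n * r) ≤ CD ^ n * wt μ z r := by
  induction n with
  | zero => simp
  | succ n ih =>
    calc wt μ z (4 ^ (n + 1) * r) = wt μ z (4 * (4 ^ n * r)) := by ring_nf
      _ ≤ CD * (CD ^ n * wt μ z r) := (wt_four hd z (by positivity)).trans (by gcongr)
      _ = _ := by ring

theorem wt_le {X : Type*} [MetricSpace X] [MeasurableSpace X] {μ : Measure X} {CD : ℝ≥0}
    (hd : IsDoublingWith μ CD) {z z' : X} {r R : ℝ} (hr : 0 < r) (n : ℕ)
    (h : dist z z' + R ≤ 4 ^ n * r) :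
    wt μ z R ≤ CD ^ n * wt μ z' r :=
  (wt_mono h).trans (wt_pow hd z' hr n)

theorem pc_comm {X : Type*} [MetricSpace X] [MeasurableSpace X] (μ : Measure X) (a b : X) :
    pc μ a b = pc μ b a := by
  simp only [pc, pairBall, dist_comm a b, union_comm]

theorem pc_le_wt {X : Type*} [MetricSpace X] [MeasurableSpace X] {μ : Measure X} {a b : X}
    {R : ℝ} (h : 2 * dist a b ≤ R) : pc μ a b ≤ wt μ b R := by
  refine ENNReal.rpow_le_rpow (measure_mono (union_subset ?_ ?_)) (by norm_num)
  · exact ball_subset_ball' (by linarith)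
  · exact ball_subset_ball (by linarith [dist_nonneg (x := a) (y := b)])

theorem wt_le_pc {X : Type*} [MetricSpace X] [MeasurableSpace X] {μ : Measure X} {a b : X}
    {R : ℝ} (h : R ≤ dist a b) : wt μ a R ≤ pc μ a b :=
  ENNReal.rpow_le_rpow (measure_mono ((ball_subset_ball h).trans subset_union_left)) (by norm_num)

theorem qD_le {X : Type*} [MetricSpace X] [MeasurableSpace X] {μ : Measure X} {δ : ℝ} {x y : X}
    {m : ℕ} {z : ℕ → X} (h : IsDeltaChain δ x y z m) :
    qDelta μ 2 δ x y ≤ ∑ j ∈ Finset.range m, pc μ (z j) (z (j + 1)) :=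
  iInf_le_of_le m (iInf_le_of_le z (iInf_le _ h))

theorem exists_chain {X : Type*} [MetricSpace X] [MeasurableSpace X] {μ : Measure X} {δ : ℝ}
    {x y : X} {A : ℝ≥0∞} (h : qDelta μ 2 δ x y < A) :
    ∃ m z, IsDeltaChain δ x y z m ∧ ∑ j ∈ Finset.range m, pc μ (z j) (z (j + 1)) < A := by
  unfold qDelta at h
  simp only [iInf_lt_iff] at h
  obtain ⟨m, z, hz, h⟩ := h
  exact ⟨m, z, hz, h⟩

theorem qD_self {X : Type*} [MetricSpace X] [MeasurableSpace X] (μ : Measure X) (δ : ℝ) (x : X) :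
    qDelta μ 2 δ x x = 0 := by
  have := qD_le (μ := μ) (δ := δ) (x := x) (y := x) (m := 0) (z := fun _ => x)
    ⟨rfl, rfl, by simp⟩
  simpa using this

theorem qD_hop {X : Type*} [MetricSpace X] [MeasurableSpace X] (μ : Measure X) {δ : ℝ} {a b : X}
    (h : dist a b ≤ δ) : qDelta μ 2 δ a b ≤ pc μ a b := by
  have := qD_le (μ := μ) (δ := δ) (x := a) (y := b) (m := 1) (z := fun n => if n = 0 then a else b)
    ⟨by simp, by simp, by simpa using h⟩
  simpa using this

theorem qD_tri {X : Type*} [MetricSpace X] [MeasurableSpace X] (μ : Measure X) (δ : ℝ)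
    (a b c : X) : qDelta μ 2 δ a c ≤ qDelta μ 2 δ a b + qDelta μ 2 δ b c := by
  refine le_of_forall_gt fun A hA => ?_
  obtain ⟨A1, hA1, A2, hA2, hlt⟩ : ∃ A1, qDelta μ 2 δ a b < A1 ∧ ∃ A2, qDelta μ 2 δ b c < A2 ∧
      A1 + A2 ≤ A := by
    have h1 : qDelta μ 2 δ a b ≠ ⊤ := fun h => by simp [h] at hA
    have h2 : qDelta μ 2 δ b c ≠ ⊤ := fun h => by simp [h] at hA
    obtain ⟨e, he, hlt⟩ := ENNReal.lt_iff_exists_add_pos_lt.1 hA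
    refine ⟨qDelta μ 2 δ a b + e / 2, ENNReal.lt_add_right h1 ?_, qDelta μ 2 δ b c + e / 2,
      ENNReal.lt_add_right h2 ?_, ?_⟩
    · simpa using he.ne'
    · simpa using he.ne'
    · refine le_of_eq_of_le ?_ hlt.le
      rw [add_add_add_comm, ENNReal.add_halves]
  obtain ⟨m, z, ⟨hz0, hzm, hz⟩, h1⟩ := exists_chain hA1
  obtain ⟨n, y, ⟨hy0, hyn, hy⟩, h2⟩ := exists_chain hA2
  let v : ℕ → X := fun j => if j < m then z j else y (j - m)
  have hv1 : ∀ j ≤ m, v j = z j := by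
    intro j hj
    rcases hj.lt_or_eq with h | h
    · simp [v, h]
    · subst h; simp [v, hzm, hy0]
  have hv2 : ∀ j, v (m + j) = y j := by intro j; simp [v]
  have hch : IsDeltaChain δ a c v (m + n) := by
    refine ⟨by rw [hv1 0 (Nat.zero_le _), hz0], by rw [hv2, hyn], fun j hj => ?_⟩
    rcases lt_or_ge j m with h | h
    · rw [hv1 j h.le, hv1 (j + 1) h]; exact hz j h
    · obtain ⟨i, rfl⟩ := Nat.exists_eq_add_of_le h
      rw [hv2, add_assoc, hv2]; exact hy i (by omega)
  refine (qD_le hch).trans_lt ?_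
  rw [Finset.sum_range_add]
  refine (ENNReal.add_lt_add ?_ ?_).trans_le hlt
  · refine lt_of_eq_of_lt ?_ h1
    refine Finset.sum_congr rfl fun j hj => ?_
    have := Finset.mem_range.1 hj
    rw [hv1 j this.le, hv1 (j + 1) this]
  · refine lt_of_eq_of_lt ?_ h2
    refine Finset.sum_congr rfl fun j hj => ?_
    rw [hv2, add_assoc, hv2]

theorem qD_symm {X : Type*} [MetricSpace X] [MeasurableSpace X] (μ : Measure X) (δ : ℝ)
    (a b : X) : qDelta μ 2 δ a b = qDelta μ 2 δ b a := by
  have key : ∀ a b : X, qDelta μ 2 δ a b ≤ qDelta μ 2 δ b a := by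
    intro a b
    refine le_of_forall_gt fun A hA => ?_
    obtain ⟨m, z, ⟨hz0, hzm, hz⟩, h1⟩ := exists_chain hA
    refine lt_of_le_of_lt (qD_le (m := m) (z := fun j => z (m - j))
      ⟨by simpa using hzm, by simpa using hz0, fun j hj => ?_⟩) ?_
    · have := hz (m - (j + 1)) (by omega)
      rw [show m - (j + 1) + 1 = m - j by omega] at this
      rwa [dist_comm]
    · refine lt_of_eq_of_lt ?_ h1
      rw [← Finset.sum_range_reflect]
      refine Finset.sum_congr rfl fun j hj => ?_
      have := Finset.mem_range.1 hj
      rw [show m - (m - 1 - j) = j + 1 by omega, show m - (m - 1 - j + 1) = j by omega, pc_comm]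
  exact le_antisymm (key a b) (key b a)

theorem qD_anti {X : Type*} [MetricSpace X] [MeasurableSpace X] (μ : Measure X) {δ δ' : ℝ}
    (h : δ ≤ δ') (a b : X) : qDelta μ 2 δ' a b ≤ qDelta μ 2 δ a b := by
  refine le_of_forall_gt fun A hA => ?_
  obtain ⟨m, z, ⟨hz0, hzm, hz⟩, h1⟩ := exists_chain hA
  exact (qD_le ⟨hz0, hzm, fun j hj => (hz j hj).trans h⟩).trans_lt h1

theorem qD_le_qmu {X : Type*} [MetricSpace X] [MeasurableSpace X] (μ : Measure X) {δ : ℝ}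
    (h : 0 < δ) (a b : X) : qDelta μ 2 δ a b ≤ qmu μ 2 a b := by
  refine le_limsup_of_frequently_le (Eventually.frequently ?_)
  filter_upwards [Ioo_mem_nhdsGT h] with t ht
  exact qD_anti μ ht.2.le a b

theorem lt_qmu {X : Type*} [MetricSpace X] [MeasurableSpace X] {μ : Measure X} {a b : X}
    {A : ℝ≥0∞} (h : A < qmu μ 2 a b) : ∃ δ > 0, A < qDelta μ 2 δ a b := by
  have := frequently_lt_of_lt_limsup (by isBoundedDefault) h
  obtain ⟨δ, h1, h2⟩ := (this.and_eventually self_mem_nhdsWithin).exists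
  exact ⟨δ, h2, h1⟩

theorem qmu_le {X : Type*} [MetricSpace X] [MeasurableSpace X] {μ : Measure X} {a b : X}
    {A : ℝ≥0∞} (h : ∀ δ > 0, qDelta μ 2 δ a b ≤ A) : qmu μ 2 a b ≤ A := by
  refine limsup_le_of_le (by isBoundedDefault) ?_
  filter_upwards [self_mem_nhdsWithin] with t ht
  exact h t ht


theorem llc_preconn {X : Type*} [MetricSpace X] {lam : ℝ} (h : IsLLC X lam) :
    IsPreconnected (univ : Set X) := by
  refine isPreconnected_of_forall_pair fun x _ y _ => ?_
  obtain ⟨K, hK, -, h1, h2⟩ := (h x (dist x y + 1) (by positivity)).1 x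
    (mem_ball_self (by positivity)) y (by rw [mem_ball, dist_comm]; linarith)
  exact ⟨K, subset_univ _, h1, h2, hK.2.isPreconnected⟩

theorem exists_at_dist {X : Type*} [MetricSpace X] (hcon : IsPreconnected (univ : Set X))
    {z p : X} {t : ℝ} (ht : 0 ≤ t) (h : t ≤ dist z p) : ∃ y, dist z y = t := by
  have := hcon.intermediate_value (mem_univ z) (mem_univ p)
    (f := fun y => dist z y) (by fun_prop)
  obtain ⟨y, -, hy⟩ := this (show t ∈ Icc (dist z z) (dist z p) from ⟨by simpa using ht, h⟩)
  exact ⟨y, hy⟩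

theorem rev_meas {X : Type*} [MetricSpace X] [MeasurableSpace X] [BorelSpace X]
    {μ : Measure X} {CD : ℝ≥0} (hd : IsDoublingWith μ CD)
    (hcon : IsPreconnected (univ : Set X)) {z p : X} {s : ℝ} (hs : 0 < s) (h : s ≤ dist z p) :
    μ (Metric.ball z s) + CD ^ 3 * μ (Metric.ball z (s / 2)) ≤ CD ^ 3 * μ (Metric.ball z s) := by
  obtain ⟨y, hy⟩ := exists_at_dist hcon (t := 3 * s / 4) (by positivity)
    (by linarith : 3 * s / 4 ≤ dist z p)
  have h1 : μ (Metric.ball z s) ≤ CD ^ 3 * μ (Metric.ball y (s / 4)) := by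
    have e1 := hd.2 y (s / 4) (by positivity)
    have e2 := hd.2 y (2 * (s / 4)) (by positivity)
    have e3 := hd.2 y (2 * (2 * (s / 4))) (by positivity)
    calc μ (Metric.ball z s) ≤ μ (Metric.ball y (2 * (2 * (2 * (s / 4))))) :=
          measure_mono (ball_subset_ball' (by rw [hy]; linarith))
      _ ≤ CD * (CD * (CD * μ (Metric.ball y (s / 4)))) := by
          refine e3.trans ?_
          gcongr
          refine e2.trans ?_
          gcongr
      _ = _ := by ring
  have h2 : μ (Metric.ball y (s / 4)) + μ (Metric.ball z (s / 2)) ≤ μ (Metric.ball z s) := by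
    rw [← measure_union _ measurableSet_ball]
    · refine measure_mono (union_subset ?_ ?_)
      · exact ball_subset_ball' (by rw [dist_comm, hy]; linarith)
      · exact ball_subset_ball (by linarith)
    · exact ball_disjoint_ball (by rw [dist_comm, hy]; linarith)
  calc _ ≤ CD ^ 3 * μ (Metric.ball y (s / 4)) + CD ^ 3 * μ (Metric.ball z (s / 2)) := by gcongr
    _ ≤ _ := by rw [← mul_add]; gcongr

theorem two_le_CD {X : Type*} [MetricSpace X] [MeasurableSpace X] [BorelSpace X]
    {μ : Measure X} {CD : ℝ≥0} (hd : IsDoublingWith μ CD)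
    (hcon : IsPreconnected (univ : Set X)) {z p : X} (h : z ≠ p) : (2 : ℝ≥0∞) ≤ CD ^ 3 := by
  have hs : 0 < dist z p := dist_pos.2 h
  have h0 := rev_meas hd hcon hs le_rfl
  have h1 := hd.2 z (dist z p / 2) (by positivity)
  rw [mul_div_cancel₀ _ (two_ne_zero)] at h1
  have h2 := one_le_CD hd z
  obtain ⟨e1, e2⟩ := hd.1 z (dist z p) hs
  obtain ⟨e3, e4⟩ := hd.1 z (dist z p / 2) (by positivity)
  have h3 : 2 * μ (Metric.ball z (dist z p)) ≤ CD ^ 3 * μ (Metric.ball z (dist z p)) := by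
    refine le_trans ?_ h0
    rw [two_mul]
    gcongr
    refine h1.trans ?_
    gcongr
    exact le_self_pow₀ h2 (by norm_num)
  exact (ENNReal.mul_le_mul_iff_left e1.ne' e2.ne).1 h3

theorem rev_dbl {X : Type*} [MetricSpace X] [MeasurableSpace X] [BorelSpace X]
    {μ : Measure X} {CD : ℝ≥0} (hd : IsDoublingWith μ CD)
    (hcon : IsPreconnected (univ : Set X)) {z p : X} {s : ℝ} (hs : 0 < s) (h : s ≤ dist z p) :
    wt μ z s + 2 * CD ^ 3 * wt μ z (s / 2) ≤ 2 * CD ^ 3 * wt μ z s := by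
  have h0 := rev_meas hd hcon hs h
  rw [← wt_sq, ← wt_sq] at h0
  have h1 := wt_pos hd z hs
  have h2 : wt μ z (s / 2) ≤ wt μ z s := wt_mono (by simp; linarith)
  have t1 := wt_ne_top hd z hs
  have t2 := wt_ne_top hd z (half_pos hs)
  lift wt μ z s to ℝ≥0 using t1 with a ha
  lift wt μ z (s / 2) to ℝ≥0 using t2 with b hb
  norm_cast at *
  have a0 : (0 : ℝ) < a := h1
  have b0 : (0 : ℝ) ≤ b := b.2
  have hb' : (b : ℝ) ≤ a := h2
  have h0' : (a : ℝ) * a + CD ^ 3 * (b * b) ≤ CD ^ 3 * (a * a) := by exact_mod_cast h0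
  have hC : (0 : ℝ) ≤ (CD : ℝ) ^ 3 := by positivity
  have : (a : ℝ) + 2 * CD ^ 3 * b ≤ 2 * CD ^ 3 * a := by
    have h3 : (a : ℝ) * a ≤ (2 * CD ^ 3 * (a - b)) * a := by
      have : (CD : ℝ) ^ 3 * ((a - b) * (a + b)) ≤ CD ^ 3 * ((a - b) * (a + a)) := by
        gcongr
      nlinarith
    have := le_of_mul_le_mul_right h3 a0
    linarith
  exact_mod_cast this

theorem wt_tele {X : Type*} [MetricSpace X] [MeasurableSpace X] [BorelSpace X]
    {μ : Measure X} {CD : ℝ≥0} (hd : IsDoublingWith μ CD)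
    (hcon : IsPreconnected (univ : Set X)) {z p : X} {s : ℝ} (hs : 0 < s) (h : s ≤ dist z p)
    (n : ℕ) :
    ∑ k ∈ Finset.range n, wt μ z (s / 2 ^ k) + 2 * CD ^ 3 * wt μ z (s / 2 ^ n)
      ≤ 2 * CD ^ 3 * wt μ z s := by
  induction n with
  | zero => simp
  | succ n ih =>
    refine le_trans ?_ ih
    rw [Finset.sum_range_succ, add_assoc]
    gcongr
    have := rev_dbl hd hcon (z := z) (p := p) (s := s / 2 ^ n) (by positivity)
      ((div_le_self hs.le (one_le_pow₀ (by norm_num))).trans h)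
    rwa [div_div, ← pow_succ] at this

theorem wt_small {X : Type*} [MetricSpace X] [MeasurableSpace X] [BorelSpace X]
    {μ : Measure X} {CD : ℝ≥0} (hd : IsDoublingWith μ CD)
    (hcon : IsPreconnected (univ : Set X)) {z p : X} (h : z ≠ p) {η : ℝ≥0∞} (hη : 0 < η) :
    ∃ r > 0, wt μ z r < η := by
  have hs : 0 < dist z p := dist_pos.2 h
  have h1 : ∑' k : ℕ, wt μ z (dist z p / 2 ^ k) ≤ 2 * CD ^ 3 * wt μ z (dist z p) :=
    ENNReal.tsum_le_of_sum_range_le fun n => le_self_add.trans (wt_tele hd hcon hs le_rfl n)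
  have h2 : ∑' k : ℕ, wt μ z (dist z p / 2 ^ k) ≠ ⊤ :=
    ne_top_of_le_ne_top (ENNReal.mul_ne_top (by finiteness) (wt_ne_top hd z hs)) h1
  have h3 := ENNReal.tendsto_atTop_zero_of_tsum_ne_top h2
  obtain ⟨n, hn⟩ := (h3.eventually (gt_mem_nhds hη)).exists
  exact ⟨_, by positivity, hn⟩

theorem unif {X : Type*} [MetricSpace X] [MeasurableSpace X]
    {μ : Measure X} (hsm : ∀ (z : X) (η : ℝ≥0∞), 0 < η → ∃ r > 0, wt μ z r < η) {Kc : Set X}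
    (hK : IsCompact Kc) {d0 : ℝ} {L : ℝ≥0∞}
    (h : ∀ a ∈ Kc, ∀ b ∈ Kc, d0 ≤ dist a b → L < qmu μ 2 a b) :
    ∃ ε0 > 0, ∀ ε, 0 < ε → ε ≤ ε0 → ∀ a ∈ Kc, ∀ b ∈ Kc, d0 ≤ dist a b →
      L < qDelta μ 2 ε a b := by
  have hcl : IsCompact ({p : X × X | d0 ≤ dist p.1 p.2} ∩ Kc ×ˢ Kc) :=
    (hK.prod hK).inter_left (isClosed_le continuous_const (by fun_prop))
  have key : ∃ ε0 > 0, ∀ ε, 0 < ε → ε ≤ ε0 →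
      ∀ p ∈ ({p : X × X | d0 ≤ dist p.1 p.2} ∩ Kc ×ˢ Kc), L < qDelta μ 2 ε p.1 p.2 := by
    refine hcl.induction_on (p := fun S => ∃ ε0 > 0, ∀ ε, 0 < ε → ε ≤ ε0 →
      ∀ p ∈ S, L < qDelta μ 2 ε p.1 p.2) ⟨1, one_pos, by simp⟩ ?_ ?_ ?_
    · rintro S T hST ⟨e, he, H⟩
      exact ⟨e, he, fun ε h1 h2 p hp => H ε h1 h2 p (hST hp)⟩
    · rintro S T ⟨e, he, H⟩ ⟨e', he', H'⟩
      refine ⟨min e e', lt_min he he', fun ε h1 h2 p hp => ?_⟩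
      rcases hp with hp | hp
      · exact H ε h1 (h2.trans (min_le_left _ _)) p hp
      · exact H' ε h1 (h2.trans (min_le_right _ _)) p hp
    · rintro ⟨a, b⟩ ⟨hab, ha, hb⟩
      obtain ⟨δ, hδ, hL⟩ := lt_qmu (h a ha b hb hab)
      obtain ⟨e, he, hlt⟩ := ENNReal.lt_iff_exists_add_pos_lt.1 hL
      have he2 : (0 : ℝ≥0∞) < e / 2 := by simpa using he.ne'
      obtain ⟨r1, hr1, hw1⟩ := hsm a _ he2
      obtain ⟨r2, hr2, hw2⟩ := hsm b _ he2
      refine ⟨Metric.ball a (min δ (r1 / 2)) ×ˢ Metric.ball b (min δ (r2 / 2)), ?_, δ, hδ, ?_⟩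
      · exact mem_nhdsWithin_of_mem_nhds (prod_mem_nhds (ball_mem_nhds _ (by positivity))
          (ball_mem_nhds _ (by positivity)))
      · rintro ε hε hεδ ⟨a', b'⟩ ⟨ha', hb'⟩
        simp only [mem_ball, lt_min_iff] at ha' hb'
        refine lt_of_lt_of_le ?_ (qD_anti μ hεδ a' b')
        by_contra hcon
        rw [not_lt] at hcon
        have t1 := qD_tri μ δ a a' b
        have t2 := qD_tri μ δ a' b' b
        have t3 : qDelta μ 2 δ a a' ≤ e / 2 := by
          rw [qD_symm]
          exact (qD_hop μ ha'.1.le).trans ((pc_le_wt (by linarith [ha'.2])).trans hw1.le)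
        have t4 : qDelta μ 2 δ b' b ≤ e / 2 :=
          (qD_hop μ hb'.1.le).trans ((pc_le_wt (by linarith [hb'.2])).trans hw2.le)
        refine absurd hlt (not_lt.2 ?_)
        calc qDelta μ 2 δ a b ≤ e / 2 + (L + e / 2) := by
              refine t1.trans (add_le_add t3 (t2.trans (add_le_add hcon t4)))
          _ = L + (e / 2 + e / 2) := by ring
          _ = L + e := by rw [ENNReal.add_halves]
  obtain ⟨e, he, H⟩ := key
  exact ⟨e, he, fun ε h1 h2 a ha b hb hab => H ε h1 h2 (a, b) ⟨hab, ha, hb⟩⟩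


theorem exists_net {X : Type*} [MetricSpace X] {K : Set X} (hK : IsCompact K) {ε : ℝ}
    (hε : 0 < ε) : ∃ N : Finset X, (∀ p ∈ N, p ∈ K) ∧
      (∀ p ∈ N, ∀ p' ∈ N, p ≠ p' → ε ≤ dist p p') ∧ ∀ q ∈ K, ∃ p ∈ N, dist q p < ε := by
  classical
  by_contra hcon
  push Not at hcon
  have key : ∀ n : ℕ, ∃ N : Finset X, N.card = n ∧ (∀ p ∈ N, p ∈ K) ∧
      (∀ p ∈ N, ∀ p' ∈ N, p ≠ p' → ε ≤ dist p p') := by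
    intro n
    induction n with
    | zero => exact ⟨∅, by simp⟩
    | succ n ih =>
      obtain ⟨N, h1, h2, h3⟩ := ih
      obtain ⟨q, hq, hqN⟩ := hcon N h2 h3
      have hnot : q ∉ N := fun h => by
        have := hqN q h
        simp at this; linarith
      refine ⟨insert q N, by rw [Finset.card_insert_of_notMem hnot, h1], ?_, ?_⟩
      · intro p hp
        rcases Finset.mem_insert.1 hp with rfl | hp
        · exact hq
        · exact h2 p hp
      · intro p hp p' hp' hne
        rcases Finset.mem_insert.1 hp with h5 | h5 <;>
          rcases Finset.mem_insert.1 hp' with h6 | h6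
        · exact absurd (h5.trans h6.symm) hne
        · rw [h5]; exact hqN p' h6
        · rw [h6, dist_comm]; exact hqN p h5
        · exact h3 p h5 p' h6 hne
  obtain ⟨t, -, htf, hcov⟩ := hK.finite_cover_balls (half_pos hε)
  obtain ⟨N, h1, h2, h3⟩ := key (htf.toFinset.card + 1)
  have h4 : ∀ p : X, ∃ y, p ∈ N → y ∈ t ∧ dist p y < ε / 2 := by
    intro p
    by_cases hp : p ∈ N
    · obtain ⟨y, hy, hpy⟩ := mem_iUnion₂.1 (hcov (h2 p hp))
      exact ⟨y, fun _ => ⟨hy, hpy⟩⟩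
    · exact ⟨p, fun h => absurd h hp⟩
  choose g hg using h4
  obtain ⟨p, hp, p', hp', hne, heq⟩ := Finset.exists_ne_map_eq_of_card_lt_of_maps_to
    (s := N) (t := htf.toFinset) (f := g) (by omega) (fun p hp => by
      simpa using (hg p hp).1)
  have e1 := h3 p hp p' hp' hne
  have e2 := (hg p hp).2
  have e3 := (hg p' hp').2
  rw [← heq, dist_comm] at e3
  linarith [dist_triangle p (g p) p']

theorem net_area {X : Type*} [MetricSpace X] [MeasurableSpace X] [BorelSpace X]
    {μ : Measure X} {CD : ℝ≥0} (hd : IsDoublingWith μ CD) {ε S : ℝ} (hε : 0 < ε) (hS : ε ≤ S)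
    {c : X} {N : Finset X} (hN : ∀ p ∈ N, dist p c ≤ S)
    (hsep : ∀ p ∈ N, ∀ p' ∈ N, p ≠ p' → ε ≤ dist p p') :
    ∑ p ∈ N, wt μ p ε * wt μ p ε ≤ CD * μ (Metric.ball c (2 * S)) := by
  calc ∑ p ∈ N, wt μ p ε * wt μ p ε ≤ ∑ p ∈ N, CD * μ (Metric.ball p (ε / 2)) := by
        refine Finset.sum_le_sum fun p _ => ?_
        rw [wt_sq]
        have := hd.2 p (ε / 2) (by positivity)
        rwa [mul_div_cancel₀ _ (two_ne_zero)] at this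
    _ = CD * μ (⋃ p ∈ N, Metric.ball p (ε / 2)) := by
        rw [← Finset.mul_sum, measure_biUnion_finset _ fun _ _ => measurableSet_ball]
        intro p hp p' hp' hne
        exact ball_disjoint_ball (by linarith [hsep p hp p' hp' hne])
    _ ≤ _ := by
        gcongr
        refine iUnion₂_subset fun p hp => ball_subset_ball' (by linarith [hN p hp])

theorem pigeon {X : Type*} (N : Finset X) (u c w : X → ℝ≥0∞) (hc : ∀ p ∈ N, c p ≠ ⊤)
    {R : ℝ≥0∞} (hR : R ≠ 0) (hR' : R ≠ ⊤) :
    ∃ t : ℝ≥0∞, t < R ∧ ∀ T : Finset X, (∀ p ∈ T, p ∈ N ∧ t < u p ∧ u p ≤ t + c p) →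
      (∑ p ∈ T, w p) * R ≤ ∑ p ∈ N, w p * c p := by
  let E : X → Set ℝ := fun p => {t | ENNReal.ofReal t < u p ∧ u p ≤ ENNReal.ofReal t + c p}
  have hE : ∀ p, MeasurableSet (E p) := fun p =>
    (measurableSet_lt ENNReal.measurable_ofReal measurable_const).inter
      (measurableSet_le measurable_const (ENNReal.measurable_ofReal.add_const _))
  let f : ℝ → ℝ≥0∞ := fun t => ∑ p ∈ N, (E p).indicator (fun _ => w p) t
  have hf : Measurable f := Finset.measurable_fun_sum _ fun p _ => measurable_const.indicator (hE p)
  have hRpos : 0 < R.toReal := ENNReal.toReal_pos hR hR'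
  have hvol : volume (Ico 0 R.toReal) = R := by
    rw [Real.volume_Ico, sub_zero, ENNReal.ofReal_toReal hR']
  obtain ⟨t, ht, hft⟩ := exists_le_setLAverage (μ := volume) (s := Ico 0 R.toReal) (f := f)
    (by rw [hvol]; exact hR) (by rw [hvol]; exact hR') hf.aemeasurable
  rw [setLAverage_eq, hvol] at hft
  have hint : ∫⁻ x in Ico 0 R.toReal, f x ≤ ∑ p ∈ N, w p * c p := by
    rw [lintegral_finsetSum _ fun p _ => measurable_const.indicator (hE p)]
    refine Finset.sum_le_sum fun p hp => ?_
    rw [lintegral_indicator (hE p), setLIntegral_const]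
    gcongr
    rw [Measure.restrict_apply (hE p)]
    by_cases hu : u p = ⊤
    · have : E p ∩ Ico 0 R.toReal = ∅ := by
        ext t
        simp only [E, hu, mem_inter_iff, mem_ofPred_eq, mem_empty_iff_false, iff_false, top_le_iff]
        rintro ⟨⟨-, h⟩, -⟩
        rw [ENNReal.add_eq_top] at h
        rcases h with h | h
        · exact ENNReal.ofReal_ne_top h
        · exact hc p hp h
      simp [this]
    · have : E p ∩ Ico 0 R.toReal ⊆ Ico ((u p).toReal - (c p).toReal) (u p).toReal := by
        rintro t ⟨⟨h1, h2⟩, h3, -⟩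
        constructor
        · have := ENNReal.toReal_mono (ENNReal.add_ne_top.2 ⟨ENNReal.ofReal_ne_top, hc p hp⟩) h2
          rw [ENNReal.toReal_add ENNReal.ofReal_ne_top (hc p hp), ENNReal.toReal_ofReal h3] at this
          linarith
        · exact (ENNReal.ofReal_lt_iff_lt_toReal h3 hu).1 h1
      refine (measure_mono this).trans ?_
      rw [Real.volume_Ico, _root_.sub_sub_cancel, ENNReal.ofReal_toReal (hc p hp)]
  refine ⟨ENNReal.ofReal t, ?_, fun T hT => ?_⟩
  · exact (ENNReal.ofReal_lt_iff_lt_toReal ht.1 hR').2 ht.2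
  · have h1 : ∑ p ∈ T, w p ≤ f t := by
      calc ∑ p ∈ T, w p = ∑ p ∈ T, (E p).indicator (fun _ => w p) t := by
            refine Finset.sum_congr rfl fun p hp => ?_
            rw [indicator_of_mem]
            exact (hT p hp).2
        _ ≤ f t := Finset.sum_le_sum_of_subset (fun p hp => (hT p hp).1)
    calc (∑ p ∈ T, w p) * R ≤ (∑ p ∈ N, w p * c p) / R * R := by
          gcongr
          exact h1.trans (hft.trans (by gcongr))
      _ = _ := ENNReal.div_mul_cancel hR hR'

theorem hop2 {X : Type*} [MetricSpace X] [MeasurableSpace X] {μ : Measure X} {CD : ℝ≥0}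
    (hd : IsDoublingWith μ CD) {a b : X} {ε : ℝ} (hε : 0 < ε) (h : dist a b ≤ 2 * ε) :
    qDelta μ 2 (2 * ε) a b ≤ CD * wt μ b ε :=
  (qD_hop μ h).trans ((pc_le_wt (by linarith)).trans (wt_four hd b hε))

theorem walk_cost {X : Type*} [MetricSpace X] [MeasurableSpace X] {μ : Measure X} {CD : ℝ≥0}
    (hd : IsDoublingWith μ CD) {ε : ℝ} (hε : 0 < ε) {G : SimpleGraph X}
    (hG : ∀ p p', G.Adj p p' → dist p p' ≤ 2 * ε) {p p' : X} (W : G.Walk p p') :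
    qDelta μ 2 (2 * ε) p p' ≤ (W.support.tail.map fun v => CD * wt μ v ε).sum := by
  induction W with
  | nil => simp [qD_self]
  | @cons a b c h W ih =>
    refine (qD_tri μ _ a b c).trans ?_
    have h2 : W.support = b :: W.support.tail := W.cons_tail_support.symm
    rw [SimpleGraph.Walk.support_cons, List.tail_cons, h2, List.map_cons, List.sum_cons]
    exact add_le_add (hop2 hd hε (hG _ _ h)) ih

theorem reach_cost {X : Type*} [MetricSpace X] [MeasurableSpace X] {μ : Measure X} {CD : ℝ≥0}
    (hd : IsDoublingWith μ CD) {ε : ℝ} (hε : 0 < ε) {G : SimpleGraph X} {T : Finset X}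
    (hG : ∀ p p', G.Adj p p' → p' ∈ T ∧ dist p p' ≤ 2 * ε) {p p' : X} (hr : G.Reachable p p') :
    qDelta μ 2 (2 * ε) p p' ≤ CD * ∑ v ∈ T, wt μ v ε := by
  classical
  obtain ⟨W, hW⟩ := hr.exists_isPath
  refine (walk_cost hd hε (fun p p' h => (hG p p' h).2) W).trans ?_
  have hnd : W.support.tail.Nodup := hW.support_nodup.tail
  rw [← List.sum_toFinset _ hnd, Finset.mul_sum]
  refine Finset.sum_le_sum_of_subset fun v hv => ?_
  rw [List.mem_toFinset] at hv
  clear hnd hW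
  induction W with
  | nil => simp at hv
  | @cons a b c h W ih =>
    rw [SimpleGraph.Walk.support_cons, List.tail_cons] at hv
    have h2 : W.support = b :: W.support.tail := W.cons_tail_support.symm
    rw [h2] at hv
    rcases List.mem_cons.1 hv with rfl | hv
    · exact (hG _ _ h).1
    · exact ih ⟨W⟩ hv


theorem core {X : Type*} [MetricSpace X] [MeasurableSpace X] [BorelSpace X]
    {μ : Measure X} {CD : ℝ≥0} (hd : IsDoublingWith μ CD) {Kc : Set X} {b : X}
    (hKc : IsCompact Kc) (hsep : PSep Kc b) {c : X} {s S ε : ℝ} (hε : 0 < ε) (hεs : ε ≤ s)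
    (hsS : s ≤ S) (hball : closedBall c (S + ε) ⊆ Kc) {R : ℝ≥0∞} (hR : R ≠ 0) (hR' : R ≠ ⊤)
    (hu : ∀ p, S - ε ≤ dist p c → dist p c ≤ S → ∀ a, dist a c ≤ s →
      R ≤ qDelta μ 2 (2 * ε) a p) :
    ∃ (T : Finset X) (V : Set X) (A : ℝ≥0∞), T.Nonempty ∧ IsOpen V ∧ c ∈ V ∧ b ∉ V ∧
      (∀ z ∈ frontier V, ∃ p ∈ T, dist z p ≤ ε) ∧ (∀ p ∈ T, s < dist p c ∧ dist p c ≤ S) ∧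
      A * R ≤ CD * (CD * μ (Metric.ball c (2 * S))) ∧ (∀ p ∈ T, wt μ p ε ≤ A) ∧
      ∀ p ∈ T, ∀ p' ∈ T, qDelta μ 2 (2 * ε) p p' ≤ CD * A := by
  classical
  have hcS : IsCompact (closedBall c S) :=
    hKc.of_isClosed_subset isClosed_closedBall
      ((closedBall_subset_closedBall (by linarith)).trans hball)
  obtain ⟨N, hN1, hN2, hN3⟩ := exists_net hcS hε
  let u : X → ℝ≥0∞ := fun p => ⨅ (a : X) (_ : dist a c ≤ s), qDelta μ 2 (2 * ε) a p
  have hu0 : ∀ p, dist p c ≤ s → u p = 0 := fun p hp => by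
    have : u p ≤ qDelta μ 2 (2 * ε) p p := iInf₂_le p hp
    rw [qD_self] at this
    exact le_antisymm this zero_le
  have hustep : ∀ p p', dist p p' ≤ 2 * ε → u p' ≤ u p + CD * wt μ p' ε := by
    intro p p' h
    have hh := hop2 (μ := μ) hd hε h
    simp only [u]
    rw [ENNReal.iInf_add]
    refine le_iInf fun a => ?_
    rw [ENNReal.iInf_add]
    refine le_iInf fun ha => ?_
    refine (iInf₂_le a ha).trans ((qD_tri μ _ a p p').trans ?_)
    gcongr
  obtain ⟨t, htR, ht⟩ := pigeon N u (fun p => CD * wt μ p ε) (fun p => wt μ p ε)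
    (fun p _ => ENNReal.mul_ne_top (by finiteness) (wt_ne_top hd p hε)) hR hR'
  let St : Finset X := N.filter fun p => t < u p ∧ u p ≤ t + CD * wt μ p ε
  have hSt : ∀ p ∈ St, p ∈ N ∧ t < u p ∧ u p ≤ t + CD * wt μ p ε := fun p hp =>
    Finset.mem_filter.1 hp
  have hStd : ∀ p ∈ St, s < dist p c ∧ dist p c ≤ S := by
    intro p hp
    refine ⟨?_, hN1 p (hSt p hp).1⟩
    by_contra hcon
    have := hu0 p (not_lt.1 hcon)
    have h2 := (hSt p hp).2.1
    rw [this] at h2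
    exact ENNReal.not_lt_zero h2
  let G : SimpleGraph X :=
    { Adj := fun p p' => p ≠ p' ∧ p ∈ St ∧ p' ∈ St ∧ dist p p' ≤ 2 * ε
      symm := ⟨fun p p' h => ⟨h.1.symm, h.2.2.1, h.2.1, by rw [dist_comm]; exact h.2.2.2⟩⟩
      loopless := ⟨fun p h => h.1 rfl⟩ }
  let Tc : X → Finset X := fun p => St.filter fun p' => G.Reachable p p'
  let KT : X → Set X := fun p => ⋃ p' ∈ Tc p, closedBall p' ε
  let K : Set X := ⋃ p ∈ St, closedBall p ε
  have hKcl : IsClosed K := isClosed_biUnion_finset fun p _ => isClosed_closedBall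
  let V : Set X := (⋃ p ∈ N.filter (fun p => u p ≤ t), Metric.ball p ε) ∩ Kᶜ
  have hVo : IsOpen V := (isOpen_biUnion fun p _ => isOpen_ball).inter hKcl.isOpen_compl
  have hcK : c ∉ K := by
    intro h
    obtain ⟨p, hp, h⟩ := mem_iUnion₂.1 h
    have := (hStd p hp).1
    rw [mem_closedBall, dist_comm] at h
    linarith
  have hStK : ∀ p ∈ St, closedBall p ε ⊆ Kc := fun p hp =>
    (closedBall_subset_closedBall' (by linarith [(hStd p hp).2])).trans hball
  have hKTK : ∀ p, KT p ⊆ K := fun p z hz => by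
    obtain ⟨p', hp', h⟩ := mem_iUnion₂.1 hz
    exact mem_iUnion₂.2 ⟨p', (Finset.mem_filter.1 hp').1, h⟩
  have hKK : K ⊆ Kc := iUnion₂_subset hStK
  have hcV : c ∈ V := by
    refine ⟨?_, hcK⟩
    obtain ⟨p, hp, hpc⟩ := hN3 c (mem_closedBall_self (by linarith))
    refine mem_iUnion₂.2 ⟨p, Finset.mem_filter.2 ⟨hp, ?_⟩, hpc⟩
    rw [hu0 p (by rw [dist_comm]; linarith)]
    exact zero_le
  have hfr : frontier V ⊆ K := by
    intro z hz
    by_contra hzK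
    rw [hVo.frontier_eq] at hz
    obtain ⟨hz1, hz2⟩ := hz
    have hcl : closure V ⊆ ⋃ p ∈ N.filter (fun p => u p ≤ t), closedBall p ε :=
      closure_minimal (fun v hv => by
        obtain ⟨p, hp, h⟩ := mem_iUnion₂.1 hv.1
        exact mem_iUnion₂.2 ⟨p, hp, ball_subset_closedBall h⟩)
        (isClosed_biUnion_finset fun p _ => isClosed_closedBall)
    obtain ⟨p, hp, hzp⟩ := mem_iUnion₂.1 (hcl hz1)
    rw [Finset.mem_filter] at hp
    rw [mem_closedBall] at hzp
    have hpc : dist p c < S - ε := by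
      by_contra hcon
      have : R ≤ u p := le_iInf₂ fun a ha => hu p (not_lt.1 hcon) (hN1 p hp.1) a ha
      exact absurd (this.trans hp.2) (not_le.2 htR)
    have hzc : dist z c ≤ S := by linarith [dist_triangle z p c]
    obtain ⟨p', hp', hzp'⟩ := hN3 z hzc
    by_cases hup : u p' ≤ t
    · exact hz2 ⟨mem_iUnion₂.2 ⟨p', Finset.mem_filter.2 ⟨hp', hup⟩, hzp'⟩, hzK⟩
    · refine hzK (mem_iUnion₂.2 ⟨p', Finset.mem_filter.2 ⟨hp', not_le.1 hup, ?_⟩, ?_⟩)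
      · refine (hustep p p' ?_).trans (by gcongr; exact hp.2)
        linarith [dist_triangle p z p', dist_comm p z]
      · exact ball_subset_closedBall hzp'
  have g0 : ∀ K ∈ KT '' (St : Set X), IsCompact K := by
    rintro _ ⟨p, hp, rfl⟩
    exact (Tc p).isCompact_biUnion fun p' hp' => hKc.of_isClosed_subset isClosed_closedBall
      (hStK p' (Finset.mem_filter.1 hp').1)
  have g1 : ∀ K ∈ KT '' (St : Set X), K ⊆ Kc := by
    rintro _ ⟨p, hp, rfl⟩
    exact (hKTK p).trans hKK
  have g2 : (KT '' (St : Set X)).PairwiseDisjoint id := by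
    rintro _ ⟨p, hp, rfl⟩ _ ⟨q, hq, rfl⟩ hne
    simp only [Function.onFun, id]
    rw [Set.disjoint_left]
    intro z hz1 hz2
    obtain ⟨p', hp', h1⟩ := mem_iUnion₂.1 hz1
    obtain ⟨q', hq', h2⟩ := mem_iUnion₂.1 hz2
    rw [Finset.mem_filter] at hp' hq'
    rw [mem_closedBall] at h1 h2
    have hr : G.Reachable p' q' := by
      by_cases he : p' = q'
      · rw [he]
      · exact SimpleGraph.Adj.reachable ⟨he, hp'.1, hq'.1, by
          linarith [dist_triangle p' z q', dist_comm p' z]⟩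
    have hpq : G.Reachable p q := hp'.2.trans (hr.trans hq'.2.symm)
    apply hne
    have : Tc p = Tc q := by
      ext v
      simp only [Tc, Finset.mem_filter]
      exact and_congr_right fun _ => ⟨fun h => hpq.symm.trans h, fun h => hpq.trans h⟩
    simp only [KT, this]
  have g3 : V ⊆ Kc := by
    rintro z ⟨hz, -⟩
    obtain ⟨p, hp, h⟩ := mem_iUnion₂.1 hz
    have hpc : dist p c ≤ S := hN1 p (Finset.mem_filter.1 hp).1
    rw [mem_ball] at h
    exact hball (by rw [mem_closedBall]; linarith [dist_triangle z p c])
  have g4 : ∀ K ∈ KT '' (St : Set X), c ∉ K := by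
    rintro _ ⟨p, hp, rfl⟩ h
    exact hcK (hKTK p h)
  have g5 : frontier V ⊆ ⋃₀ (KT '' (St : Set X)) := by
    intro z hz
    obtain ⟨p, hp, h⟩ := mem_iUnion₂.1 (hfr hz)
    exact ⟨KT p, ⟨p, hp, rfl⟩, mem_iUnion₂.2 ⟨p, Finset.mem_filter.2 ⟨hp, .rfl⟩, h⟩⟩
  obtain ⟨K0, hK0, V', hV'o, hcV', hbV', hV'f⟩ := hsep (KT '' (St : Set X))
    (St.finite_toSet.image _) g0 g1 g2 V c hVo g3 hcV g4 g5
  · obtain ⟨p0, hp0, rfl⟩ := hK0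
    have hTS : Tc p0 ⊆ St := Finset.filter_subset _ _
    refine ⟨Tc p0, V', ∑ p ∈ St, wt μ p ε, ⟨p0, Finset.mem_filter.2 ⟨hp0, .rfl⟩⟩, hV'o, hcV', hbV',
      ?_, fun p hp => hStd p (hTS hp), ?_, ?_, ?_⟩
    · intro z hz
      obtain ⟨p, hp, h⟩ := mem_iUnion₂.1 (hV'f hz)
      exact ⟨p, hp, h⟩
    · refine (ht St hSt).trans ?_
      have := net_area hd hε (hεs.trans hsS) (c := c) (fun p hp => hN1 p hp) hN2
      calc ∑ p ∈ N, wt μ p ε * (CD * wt μ p ε) = CD * ∑ p ∈ N, wt μ p ε * wt μ p ε := by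
            rw [Finset.mul_sum]; exact Finset.sum_congr rfl fun _ _ => by ring
        _ ≤ _ := by gcongr
    · intro p hp
      exact Finset.single_le_sum (f := fun p => wt μ p ε) (fun _ _ => zero_le) (hTS hp)
    · intro p hp p' hp'
      refine reach_cost hd hε (G := G) (fun a a' h => ⟨h.2.2.1, h.2.2.2⟩) ?_
      exact (Finset.mem_filter.1 hp).2.symm.trans (Finset.mem_filter.1 hp').2


/-- Bundled working hypotheses. -/
structure Ctx {X : Type*} [MetricSpace X] [MeasurableSpace X] (μ : Measure X) (CD CW : ℝ≥0)
    (lam : ℝ) (l : ℕ) (Kc : Set X) (b : X) : Prop where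
  hd : IsDoublingWith μ CD
  hw : IsWMDM μ 2 CW
  hL : IsLLC X lam
  hlam : 1 ≤ lam
  hl : lam ≤ 2 ^ l
  hK : IsCompact Kc
  hsep : PSep Kc b
  hcon : IsPreconnected (univ : Set X)
  hne : ∃ x y : X, x ≠ y

theorem Ctx.pow_le {X : Type*} [MetricSpace X] [MeasurableSpace X] {μ : Measure X} {CD CW : ℝ≥0}
    {lam : ℝ} {l : ℕ} {Kc : Set X} {b : X} (H : Ctx μ CD CW lam l Kc b) : lam ≤ 4 ^ l :=
  H.hl.trans (pow_le_pow_left₀ (by norm_num) (by norm_num) _)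

theorem Ctx.one_le {X : Type*} [MetricSpace X] [MeasurableSpace X] {μ : Measure X} {CD CW : ℝ≥0}
    {lam : ℝ} {l : ℕ} {Kc : Set X} {b : X} (H : Ctx μ CD CW lam l Kc b) : (1 : ℝ≥0∞) ≤ CD :=
  one_le_CD H.hd b

theorem Ctx.CD_ne {X : Type*} [MetricSpace X] [MeasurableSpace X] {μ : Measure X} {CD CW : ℝ≥0}
    {lam : ℝ} {l : ℕ} {Kc : Set X} {b : X} (H : Ctx μ CD CW lam l Kc b) : (CD : ℝ≥0∞) ≠ 0 :=
  (lt_of_lt_of_le one_pos H.one_le).ne'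

theorem Ctx.CW_ne {X : Type*} [MetricSpace X] [MeasurableSpace X] {μ : Measure X} {CD CW : ℝ≥0}
    {lam : ℝ} {l : ℕ} {Kc : Set X} {b : X} (H : Ctx μ CD CW lam l Kc b) : (CW : ℝ≥0∞) ≠ 0 := by
  obtain ⟨x, y, hxy⟩ := H.hne
  intro h0
  have h1 := H.hw x y
  rw [h0, zero_mul] at h1
  have h2 := (wt_pos H.hd x (dist_pos.2 hxy)).trans_le (wt_le_pc (b := y) le_rfl)
  exact absurd h1 (not_le.2 h2)

theorem Ctx.small {X : Type*} [MetricSpace X] [MeasurableSpace X] [BorelSpace X]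
    {μ : Measure X} {CD CW : ℝ≥0}
    {lam : ℝ} {l : ℕ} {Kc : Set X} {b : X} (H : Ctx μ CD CW lam l Kc b) (z : X) (η : ℝ≥0∞)
    (hη : 0 < η) : ∃ r > 0, wt μ z r < η := by
  obtain ⟨x, y, hxy⟩ := H.hne
  by_cases h : z = x
  · exact wt_small H.hd H.hcon (h ▸ hxy) hη
  · exact wt_small H.hd H.hcon h hη

theorem lowq {X : Type*} [MetricSpace X] [MeasurableSpace X] [BorelSpace X]
    {μ : Measure X} {CD CW : ℝ≥0}
    {lam : ℝ} {l : ℕ} {Kc : Set X} {b : X} (H : Ctx μ CD CW lam l Kc b) {c : X} {r d0 Rw : ℝ}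
    (hr : closedBall c r ⊆ Kc) (hd0 : 0 < d0) (hRw : 0 < Rw) (n : ℕ) (hn : r + Rw ≤ 4 ^ n * d0) :
    ∀ᶠ ε in 𝓝[>] (0 : ℝ), ∀ a, dist a c ≤ r → ∀ p, dist p c ≤ r → d0 ≤ dist a p →
      wt μ c Rw / (2 * (CD ^ n * CW)) < qDelta μ 2 (2 * ε) a p := by
  have hkey : ∀ a ∈ closedBall c r, ∀ p ∈ closedBall c r, d0 ≤ dist a p →
      wt μ c Rw / (2 * (CD ^ n * CW)) < qmu μ 2 a p := by
    intro a ha p hp hap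
    have h1 : wt μ c Rw ≤ CD ^ n * wt μ a d0 :=
      wt_le H.hd hd0 n (by rw [mem_closedBall, dist_comm] at ha; linarith)
    have h2 : wt μ a d0 ≤ CW * qmu μ 2 a p := (wt_le_pc hap).trans (H.hw a p)
    have h3 : wt μ c Rw ≤ CD ^ n * CW * qmu μ 2 a p := by
      rw [mul_assoc]; exact h1.trans (by gcongr)
    have hpos := wt_pos H.hd c hRw
    have htop := wt_ne_top H.hd c hRw
    have hB0 : (CD : ℝ≥0∞) ^ n * CW ≠ 0 := mul_ne_zero (pow_ne_zero _ H.CD_ne) H.CW_ne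
    have hBt : (CD : ℝ≥0∞) ^ n * CW ≠ ⊤ := by finiteness
    refine ENNReal.div_lt_of_lt_mul' ?_
    calc wt μ c Rw < 2 * wt μ c Rw := by
          rw [two_mul]; exact ENNReal.lt_add_right htop hpos.ne'
      _ ≤ _ := by rw [mul_assoc]; gcongr
  obtain ⟨ε0, hε0, h⟩ := unif H.small
    (H.hK.of_isClosed_subset isClosed_closedBall hr) hkey
  filter_upwards [Ioo_mem_nhdsGT (half_pos hε0)] with ε hε a ha p hp hap
  exact h (2 * ε) (by linarith [hε.1]) (by linarith [hε.2]) a ha p hp hap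

/-- A loop at scale `s` around `c`. -/
structure Loop {X : Type*} [MetricSpace X] [MeasurableSpace X] (μ : Measure X) (CD : ℝ≥0)
    (b c : X) (s ε : ℝ) (A : ℝ≥0∞) (T : Finset X) (V : Set X) : Prop where
  ne : T.Nonempty
  op : IsOpen V
  cV : c ∈ V
  bV : b ∉ V
  fr : ∀ z ∈ frontier V, ∃ p ∈ T, dist z p ≤ ε
  ring : ∀ p ∈ T, s < dist p c ∧ dist p c ≤ 2 * s
  wA : ∀ p ∈ T, wt μ p ε ≤ A
  qA : ∀ p ∈ T, ∀ p' ∈ T, qDelta μ 2 (2 * ε) p p' ≤ CD * A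

theorem exists_loop {X : Type*} [MetricSpace X] [MeasurableSpace X] [BorelSpace X]
    {μ : Measure X} {CD CW : ℝ≥0}
    {lam : ℝ} {l : ℕ} {Kc : Set X} {b : X} (H : Ctx μ CD CW lam l Kc b) {c : X} {s : ℝ}
    (hs : 0 < s) (hball : closedBall c (3 * s) ⊆ Kc) :
    ∀ᶠ ε in 𝓝[>] (0 : ℝ), ∃ T V, Loop μ CD b c s ε (2 * CW * CD ^ 5 * wt μ c s) T V := by
  have hlow := lowq H (c := c) (r := 2 * s) (d0 := s / 2) (Rw := 4 * s)
    ((closedBall_subset_closedBall (by linarith)).trans hball) (by positivity) (by positivity) 2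
    (by linarith)
  filter_upwards [hlow, Ioo_mem_nhdsGT (half_pos hs)] with ε hlow hε
  obtain ⟨hε, hε2⟩ := hε
  set W := wt μ c (4 * s) with hW
  have hpos : W ≠ 0 := (wt_pos H.hd c (by positivity)).ne'
  have htop : W ≠ ⊤ := wt_ne_top H.hd c (by positivity)
  set B : ℝ≥0∞ := 2 * (CD ^ 2 * CW) with hB
  have hB0 : B ≠ 0 := mul_ne_zero two_ne_zero (mul_ne_zero (pow_ne_zero _ H.CD_ne) H.CW_ne)
  have hBt : B ≠ ⊤ := by finiteness
  obtain ⟨T, V, A, h1, h2, h3, h4, h5, h6, h7, h8, h9⟩ := core H.hd H.hK H.hsep (c := c) (s := s)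
    (S := 2 * s) hε (by linarith) (by linarith)
    ((closedBall_subset_closedBall (by linarith)).trans hball)
    (R := W / B) (ENNReal.div_ne_zero.2 ⟨hpos, hBt⟩) (ENNReal.div_ne_top htop hB0)
    (fun p hp1 hp2 a ha => (hlow a (by linarith) p hp2 (by
      linarith [dist_triangle p a c, dist_comm p a])).le)
  have hA : A ≤ 2 * CW * CD ^ 5 * wt μ c s := by
    have e1 : A * W ≤ (B * CD ^ 2 * W) * W := by
      calc A * W = A * (W / B) * B := by rw [mul_assoc, ENNReal.div_mul_cancel hB0 hBt]
        _ ≤ CD * (CD * μ (Metric.ball c (2 * (2 * s)))) * B := by gcongr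
        _ = _ := by
          rw [← wt_sq, show 2 * (2 * s) = 4 * s by ring, ← hW]; ring
    have e2 : A ≤ B * CD ^ 2 * W := (ENNReal.mul_le_mul_iff_left hpos htop).1 e1
    refine e2.trans ?_
    calc B * CD ^ 2 * W ≤ B * CD ^ 2 * (CD * wt μ c s) := by
          gcongr
          exact wt_four H.hd c hs
      _ = _ := by rw [hB]; ring
  exact ⟨T, V, h1, h2, h3, h4, h5, h6, fun p hp => (h8 p hp).trans hA,
    fun p hp p' hp' => (h9 p hp p' hp').trans (by gcongr)⟩

/-- A radial chain at scale `s` around `c`. -/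
structure Radial {X : Type*} [MetricSpace X] [MeasurableSpace X] (μ : Measure X)
    (c : X) (lam s ε : ℝ) (D : ℝ≥0∞) (z : ℕ → X) (m : ℕ) : Prop where
  st : dist (z 0) c ≤ s / (8 * lam)
  en : 8 * lam * s - ε ≤ dist (z m) c
  step : ∀ j < m, dist (z j) (z (j + 1)) ≤ 2 * ε
  cost : ∑ j ∈ Finset.range m, pc μ (z j) (z (j + 1)) ≤ D

theorem exists_radial {X : Type*} [MetricSpace X] [MeasurableSpace X] [BorelSpace X]
    {μ : Measure X} {CD CW : ℝ≥0}
    {lam : ℝ} {l : ℕ} {Kc : Set X} {b : X} (H : Ctx μ CD CW lam l Kc b) {c : X} {s : ℝ}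
    (hs : 0 < s) (hball : closedBall c (9 * lam * s) ⊆ Kc) (hb : 9 * lam * s ≤ dist c b) :
    ∀ᶠ ε in 𝓝[>] (0 : ℝ), ∃ z m,
      Radial μ c lam s ε (2 * CW * CD ^ (10 + 3 * l) * wt μ c s) z m := by
  have hlam := H.hlam
  have hlam0 : 0 < lam := by linarith
  have hls : s ≤ lam * s := le_mul_of_one_le_left hs.le hlam
  have hσ : 0 < s / (8 * lam) := by positivity
  have hσs : s / (8 * lam) ≤ s / 8 := by gcongr; linarith
  set d0 : ℝ := s / (8 * lam) / (2 * lam) with hd0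
  have hd0p : 0 < d0 := by positivity
  have hd0s : d0 ≤ s / (8 * lam) := div_le_self hσ.le (by linarith)
  set n : ℕ := 5 + 2 * l with hn
  have hlow := lowq H (c := c) (r := 8 * lam * s) (d0 := d0) (Rw := 16 * lam * s)
    ((closedBall_subset_closedBall (by nlinarith)).trans hball) hd0p (by positivity) n (by
      have e1 : lam ^ 3 ≤ 4 ^ (2 * l) := by
        calc lam ^ 3 ≤ lam ^ 4 := pow_le_pow_right₀ hlam (by norm_num)
          _ ≤ (2 ^ l) ^ 4 := pow_le_pow_left₀ hlam0.le H.hl 4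
          _ = 4 ^ (2 * l) := by
            rw [show (4 : ℝ) = 2 ^ 2 by norm_num, ← pow_mul, ← pow_mul]; congr 1; ring
      have e2 : 8 * lam * s + 16 * lam * s = 384 * lam ^ 3 * d0 := by
        rw [hd0]; field_simp; ring
      rw [e2, hn, pow_add]
      gcongr
      norm_num)
  filter_upwards [hlow, Ioo_mem_nhdsGT hd0p] with ε hlow hε
  obtain ⟨hε, hε2⟩ := hε
  set W := wt μ c (16 * lam * s) with hW
  have hpos : W ≠ 0 := (wt_pos H.hd c (by positivity)).ne'
  have htop : W ≠ ⊤ := wt_ne_top H.hd c (by positivity)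
  set B : ℝ≥0∞ := 2 * (CD ^ n * CW) with hB
  have hB0 : B ≠ 0 := mul_ne_zero two_ne_zero (mul_ne_zero (pow_ne_zero _ H.CD_ne) H.CW_ne)
  have hBt : B ≠ ⊤ := by finiteness
  have hC3 : (CD : ℝ≥0∞) ^ 3 ≠ 0 := pow_ne_zero _ H.CD_ne
  have hmain : ∃ p, 8 * lam * s - ε ≤ dist p c ∧ ∃ a, dist a c ≤ s / (8 * lam) ∧
      qDelta μ 2 (2 * ε) a p < B * CD ^ 3 * W := by
    by_contra hcon
    push Not at hcon
    obtain ⟨T, V, A, ⟨p0, hp0⟩, h2, h3, h4, h5, h6, h7, h8, h9⟩ := core H.hd H.hK H.hsep (c := c)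
      (s := s / (8 * lam)) (S := 8 * lam * s) (ε := ε) hε (by linarith) (by linarith)
      ((closedBall_subset_closedBall (by linarith)).trans hball)
      (R := B * CD ^ 3 * W) (by positivity) (by finiteness)
      (fun p hp1 hp2 a ha => hcon p hp1 a ha)
    have hp0d := h6 p0 hp0
    obtain ⟨K, hK, hKs, hcK, hbK⟩ := (H.hL p0 (s / (8 * lam)) hσ).2 c b
      (by rw [mem_ball, dist_comm]; linarith [hp0d.1]) (by
        rw [mem_ball, not_lt]
        linarith [dist_triangle c p0 b, dist_comm c p0, dist_comm b p0])
    obtain ⟨z, hzK, hzf⟩ := hits_frontier hK.2.isPreconnected h2 hcK h3 hbK h4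
    obtain ⟨p', hp', hzp'⟩ := h5 z hzf
    have hz := hKs hzK
    rw [mem_compl_iff, mem_ball, not_lt] at hz
    have hd2 : s / (8 * lam) / lam = 2 * d0 := by rw [hd0]; field_simp
    have hfar : d0 ≤ dist p0 p' := by
      linarith [dist_triangle z p' p0, dist_comm p' p0]
    have q1 := hlow p0 hp0d.2 p' (h6 p' hp').2 hfar
    have q2 := h9 p0 hp0 p' hp'
    have q3 : W / B < CD * A := q1.trans_le q2
    have q4 : W / B * (B * CD ^ 3 * W) < CD * A * (B * CD ^ 3 * W) :=
      (ENNReal.mul_lt_mul_iff_left (by positivity) (by finiteness)).2 q3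
    have q5 : CD * A * (B * CD ^ 3 * W) ≤ CD * (CD * (CD * (W * W))) := by
      rw [mul_assoc]
      refine mul_le_mul_right ?_ _
      rw [show 2 * (8 * lam * s) = 16 * lam * s by ring, ← wt_sq] at h7
      exact h7
    refine absurd (q4.trans_le q5) (not_lt.2 (le_of_eq (Eq.symm ?_)))
    calc W / B * (B * CD ^ 3 * W) = (W / B * B) * (CD ^ 3 * W) := by ring
      _ = W * (CD ^ 3 * W) := by rw [ENNReal.div_mul_cancel hB0 hBt]
      _ = _ := by ring
  obtain ⟨p, hp, a, ha, hap⟩ := hmain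
  obtain ⟨m, z, ⟨hz0, hzm, hz⟩, hcost⟩ := exists_chain hap
  refine ⟨z, m, by rw [hz0]; exact ha, by rw [hzm]; exact hp, hz, hcost.le.trans ?_⟩
  calc B * CD ^ 3 * W ≤ B * CD ^ 3 * (CD ^ (2 + l) * wt μ c s) := by
        gcongr
        refine wt_le H.hd hs _ ?_
        rw [dist_self, zero_add, pow_add]
        have := H.pow_le
        gcongr
        norm_num
    _ = _ := by
      rw [hB, hn]; ring


theorem crossing {X : Type*} [MetricSpace X] [MeasurableSpace X]
    {μ : Measure X} {CD CW : ℝ≥0}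
    {lam : ℝ} {l : ℕ} {Kc : Set X} {b : X} (H : Ctx μ CD CW lam l Kc b) {c z0 : X} {s s' ε : ℝ}
    {A D : ℝ≥0∞} {T : Finset X} {V : Set X} {z : ℕ → X} {m : ℕ}
    (lo : Loop μ CD b c s ε A T V) (ra : Radial μ z0 lam s' ε D z m) (hs' : 0 < s')
    (h1 : s' / 2 ≤ s) (h2 : s ≤ s') (hε : 0 < ε) (hε' : ε ≤ s' / 8)
    (hdist : dist z0 c ≤ s' / (8 * lam)) (hb : 6 * lam * s' ≤ dist c b) :
    ∃ j ≤ m, ∃ p ∈ T, dist (z j) p ≤ 4 * lam * ε := by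
  have hlam := H.hlam
  have hlam0 : 0 < lam := by linarith
  have hls : s' ≤ lam * s' := le_mul_of_one_le_left hs'.le hlam
  have hle : ε ≤ lam * ε := le_mul_of_one_le_left hε.le hlam
  have hσ : 0 < s' / (8 * lam) := by positivity
  have hσs : s' / (8 * lam) ≤ s' / 8 := by gcongr; linarith
  have hstart : z 0 ∈ V := by
    by_contra hnot
    obtain ⟨K, hK, hKs, hcK, haK⟩ := (H.hL c (3 * (s' / (8 * lam))) (by positivity)).1 c
      (mem_ball_self (by positivity)) (z 0) (by
        rw [mem_ball]; linarith [dist_triangle (z 0) z0 c, ra.st])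
    obtain ⟨v, hvK, hvf⟩ := hits_frontier hK.2.isPreconnected lo.op hcK lo.cV haK hnot
    obtain ⟨p, hp, hvp⟩ := lo.fr v hvf
    have e1 := hKs hvK
    rw [mem_ball, show lam * (3 * (s' / (8 * lam))) = 3 * s' / 8 by field_simp] at e1
    have e2 := (lo.ring p hp).1
    linarith [dist_triangle p v c, dist_comm p v]
  have hend : z m ∉ V := by
    intro hin
    obtain ⟨K, hK, hKs, haK, hbK⟩ := (H.hL c (6 * lam * s') (by positivity)).2 (z m) b
      (by
        rw [mem_ball, not_lt]
        linarith [dist_triangle (z m) c z0, ra.en, dist_comm z0 c])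
      (by rw [mem_ball, not_lt, dist_comm]; exact hb)
    obtain ⟨v, hvK, hvf⟩ := hits_frontier hK.2.isPreconnected lo.op haK hin hbK lo.bV
    obtain ⟨p, hp, hvp⟩ := lo.fr v hvf
    have e1 := hKs hvK
    rw [mem_compl_iff, mem_ball, not_lt, show 6 * lam * s' / lam = 6 * s' by field_simp] at e1
    have e2 := (lo.ring p hp).2
    linarith [dist_triangle v p c]
  obtain ⟨j, hjm, hjV, hjV'⟩ : ∃ j < m, z j ∈ V ∧ z (j + 1) ∉ V := by
    by_contra hcon
    push Not at hcon
    have : ∀ j ≤ m, z j ∈ V := by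
      intro j
      induction j with
      | zero => exact fun _ => hstart
      | succ j ih => exact fun hj => hcon j (by omega) (ih (by omega))
    exact hend (this m le_rfl)
  obtain ⟨K, hK, hKs, haK, hbK⟩ := (H.hL (z j) (3 * ε) (by positivity)).1 (z j)
    (mem_ball_self (by positivity)) (z (j + 1)) (by
      rw [mem_ball, dist_comm]; linarith [ra.step j hjm])
  obtain ⟨v, hvK, hvf⟩ := hits_frontier hK.2.isPreconnected lo.op haK hjV hbK hjV'
  obtain ⟨p, hp, hvp⟩ := lo.fr v hvf
  have e1 := hKs hvK
  rw [mem_ball] at e1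
  refine ⟨j, hjm.le, p, hp, ?_⟩
  linarith [dist_triangle (z j) v p, dist_comm (z j) v]

theorem radial_cost {X : Type*} [MetricSpace X] [MeasurableSpace X]
    {μ : Measure X} {lam : ℝ} {c : X} {s ε : ℝ}
    {D : ℝ≥0∞} {z : ℕ → X} {m : ℕ} (ra : Radial μ c lam s ε D z m) {i j : ℕ} (hi : i ≤ m)
    (hj : j ≤ m) : qDelta μ 2 (2 * ε) (z i) (z j) ≤ D := by
  have key : ∀ i j, i ≤ j → j ≤ m → qDelta μ 2 (2 * ε) (z i) (z j) ≤ D := by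
    intro i j hij hjm
    refine (qD_le (m := j - i) (z := fun k => z (i + k)) ⟨by simp, by
      simp only [Nat.add_sub_cancel' hij], fun k hk => ra.step (i + k) (by omega)⟩).trans ?_
    refine le_trans ?_ ra.cost
    have := Finset.sum_range_add (fun j => pc μ (z j) (z (j + 1))) i (j - i)
    calc _ ≤ ∑ x ∈ Finset.range (i + (j - i)), pc μ (z x) (z (x + 1)) := by
          rw [this]; exact le_add_self
      _ ≤ _ := Finset.sum_le_sum_of_subset (by
          intro k; simp only [Finset.mem_range]; omega)
  rcases le_total i j with h | h
  · exact key i j h hj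
  · rw [qD_symm]; exact key j i h hi

theorem join {X : Type*} [MetricSpace X] [MeasurableSpace X]
    {μ : Measure X} {CD CW : ℝ≥0}
    {lam : ℝ} {l : ℕ} {Kc : Set X} {b : X} (H : Ctx μ CD CW lam l Kc b)
    {z0 c₁ c₂ : X} {s' s₁ s₂ ε δ : ℝ}
    {T₁ T₂ : Finset X} {V₁ V₂ : Set X} {z : ℕ → X} {m : ℕ}
    (lo₁ : Loop μ CD b c₁ s₁ ε (2 * CW * CD ^ 5 * wt μ c₁ s₁) T₁ V₁)
    (lo₂ : Loop μ CD b c₂ s₂ ε (2 * CW * CD ^ 5 * wt μ c₂ s₂) T₂ V₂)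
    (ra : Radial μ z0 lam s' ε (2 * CW * CD ^ (10 + 3 * l) * wt μ z0 s') z m) (hs' : 0 < s')
    (h1 : s' / 2 ≤ s₁) (h2 : s₁ ≤ s') (h1' : s' / 2 ≤ s₂) (h2' : s₂ ≤ s')
    (hε : 0 < ε) (hε' : ε ≤ s' / 8)
    (hdist : dist z0 c₁ ≤ s' / (8 * lam)) (hb : 6 * lam * s' ≤ dist c₁ b)
    (hdist' : dist z0 c₂ ≤ s' / (8 * lam)) (hb' : 6 * lam * s' ≤ dist c₂ b)
    (hδ : 4 * lam * ε ≤ δ) {p₁ p₂ : X} (hp₁ : p₁ ∈ T₁) (hp₂ : p₂ ∈ T₂) :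
    qDelta μ 2 δ p₁ p₂ ≤ 2 * CW * CD ^ (10 + 3 * l) *
      (2 * wt μ c₁ s₁ + wt μ z0 s' + 2 * wt μ c₂ s₂) := by
  have hlam := H.hlam
  have hle : ε ≤ lam * ε := le_mul_of_one_le_left hε.le hlam
  have h2δ : 2 * ε ≤ δ := by linarith
  have hC := H.one_le
  have half : ∀ {c : X} {s : ℝ} {T : Finset X} {V : Set X} {p q v : X}
      (lo : Loop μ CD b c s ε (2 * CW * CD ^ 5 * wt μ c s) T V) (hp : p ∈ T) (hq : q ∈ T)
      (hv : dist v q ≤ 4 * lam * ε),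
      qDelta μ 2 δ p v ≤ 2 * CW * CD ^ (10 + 3 * l) * (2 * wt μ c s) := by
    intro c s T V p q v lo hp hq hv
    have e1 : qDelta μ 2 δ p q ≤ 2 * CW * CD ^ (10 + 3 * l) * wt μ c s := by
      refine (qD_anti μ h2δ p q).trans ((lo.qA p hp q hq).trans ?_)
      calc CD * (2 * CW * CD ^ 5 * wt μ c s) = 2 * CW * CD ^ 6 * wt μ c s := by ring
        _ ≤ _ := mul_le_mul_left (mul_le_mul_right (pow_le_pow_right₀ hC (by omega)) _) _
    have e2 : qDelta μ 2 δ q v ≤ 2 * CW * CD ^ (10 + 3 * l) * wt μ c s := by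
      rw [qD_symm]
      refine (qD_hop μ (hv.trans hδ)).trans ?_
      have e3 : wt μ q (8 * lam * ε) ≤ CD ^ (2 + l) * wt μ q ε := by
        refine wt_le H.hd hε _ ?_
        rw [dist_self, zero_add, pow_add]
        have := H.pow_le
        gcongr
        norm_num
      refine (pc_le_wt (R := 8 * lam * ε) (by linarith)).trans (e3.trans ?_)
      calc CD ^ (2 + l) * wt μ q ε ≤ CD ^ (2 + l) * (2 * CW * CD ^ 5 * wt μ c s) := by
            gcongr; exact lo.wA q hq
        _ = 2 * CW * CD ^ (7 + l) * wt μ c s := by ring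
        _ ≤ _ := mul_le_mul_left (mul_le_mul_right (pow_le_pow_right₀ hC (by omega)) _) _
    refine (qD_tri μ δ p q v).trans ((add_le_add e1 e2).trans (le_of_eq (by ring)))
  obtain ⟨i, hi, q₁, hq₁, hi1⟩ := crossing H lo₁ ra hs' h1 h2 hε hε' hdist hb
  obtain ⟨j, hj, q₂, hq₂, hj1⟩ := crossing H lo₂ ra hs' h1' h2' hε hε' hdist' hb'
  have e1 := half lo₁ hp₁ hq₁ hi1
  have e2 := half lo₂ hp₂ hq₂ hj1
  rw [qD_symm] at e2
  have e3 := (qD_anti μ h2δ (z i) (z j)).trans (radial_cost ra hi hj)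
  refine (qD_tri μ δ p₁ (z i) p₂).trans ((add_le_add e1
    ((qD_tri μ δ (z i) (z j) p₂).trans (add_le_add e3 e2))).trans (le_of_eq (by ring)))


theorem side {X : Type*} [MetricSpace X] [MeasurableSpace X] [BorelSpace X]
    {μ : Measure X} {CD CW : ℝ≥0}
    {lam : ℝ} {l : ℕ} {Kc : Set X} {b : X} (H : Ctx μ CD CW lam l Kc b) {z : X} {s0 : ℝ}
    (hs0 : 0 < s0) (hball : closedBall z (9 * lam * s0) ⊆ Kc) (hb : 9 * lam * s0 ≤ dist z b)
    {δ : ℝ} (hδ : 0 < δ) {η : ℝ≥0∞} (hη : 0 < η) :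
    ∀ᶠ ε in 𝓝[>] (0 : ℝ), ∃ (T : Finset X) (V : Set X) (v : ℕ → X) (m : ℕ),
      Loop μ CD b z s0 ε (2 * CW * CD ^ 5 * wt μ z s0) T V ∧
      Radial μ z lam s0 ε (2 * CW * CD ^ (10 + 3 * l) * wt μ z s0) v m ∧
      ∃ p ∈ T, qDelta μ 2 δ z p ≤
        2 * CW * CD ^ (10 + 3 * l) * (5 * (2 * CD ^ 3 * wt μ z s0)) + η := by
  have hlam := H.hlam
  have hlam0 : 0 < lam := by linarith
  have hls : s0 ≤ lam * s0 := le_mul_of_one_le_left hs0.le hlam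
  obtain ⟨r, hr, hwr⟩ := H.small z η hη
  obtain ⟨n, hn⟩ : ∃ n : ℕ, 4 * (s0 / 2 ^ n) < min r δ := by
    have : Tendsto (fun n : ℕ => 4 * (s0 / 2 ^ n)) atTop (𝓝 (4 * 0)) := by
      refine Tendsto.const_mul _ ?_
      have h1 := tendsto_pow_atTop_nhds_zero_of_lt_one (r := (1 / 2 : ℝ)) (by norm_num) (by norm_num)
      have h2 := h1.const_mul s0
      simpa [div_eq_mul_inv] using h2
    rw [mul_zero] at this
    exact (this.eventually (gt_mem_nhds (lt_min hr hδ))).exists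
  have hsk : ∀ k : ℕ, 0 < s0 / 2 ^ k := fun k => by positivity
  have hsk0 : ∀ k : ℕ, s0 / 2 ^ k ≤ s0 := fun k => div_le_self hs0.le (one_le_pow₀ (by norm_num))
  have hlsk : ∀ k : ℕ, lam * (s0 / 2 ^ k) ≤ lam * s0 := fun k => by gcongr; exact hsk0 k
  have hloops : ∀ᶠ ε in 𝓝[>] (0 : ℝ), ∀ k ∈ Finset.range (n + 1), ∃ T V,
      Loop μ CD b z (s0 / 2 ^ k) ε (2 * CW * CD ^ 5 * wt μ z (s0 / 2 ^ k)) T V := by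
    rw [Filter.eventually_all_finset]
    intro k _
    exact exists_loop H (hsk k) ((closedBall_subset_closedBall (by linarith [hsk0 k])).trans hball)
  have hrads : ∀ᶠ ε in 𝓝[>] (0 : ℝ), ∀ k ∈ Finset.range (n + 1), ∃ v m,
      Radial μ z lam (s0 / 2 ^ k) ε
        (2 * CW * CD ^ (10 + 3 * l) * wt μ z (s0 / 2 ^ k)) v m := by
    rw [Filter.eventually_all_finset]
    intro k _
    have := hlsk k
    exact exists_radial H (hsk k)
      ((closedBall_subset_closedBall (by nlinarith)).trans hball) (by nlinarith)
  filter_upwards [hloops, hrads, Ioo_mem_nhdsGT (by positivity : 0 < s0 / 2 ^ n / 8),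
    Ioo_mem_nhdsGT (by positivity : 0 < δ / (4 * lam))] with ε hloops hrads hε1 hε2
  have hε : 0 < ε := hε1.1
  have hεδ : 4 * lam * ε ≤ δ := by
    have := hε2.2.le
    rw [le_div_iff₀ (by positivity)] at this
    linarith
  have hloops' : ∀ k, ∃ T V, k ≤ n →
      Loop μ CD b z (s0 / 2 ^ k) ε (2 * CW * CD ^ 5 * wt μ z (s0 / 2 ^ k)) T V := by
    intro k
    by_cases hk : k ≤ n
    · obtain ⟨T, V, h⟩ := hloops k (Finset.mem_range.2 (by omega))
      exact ⟨T, V, fun _ => h⟩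
    · exact ⟨∅, ∅, fun h => absurd h hk⟩
  choose T V hTV using hloops'
  have hpt : ∀ k, ∃ p, k ≤ n → p ∈ T k := by
    intro k
    by_cases hk : k ≤ n
    · obtain ⟨p, hp⟩ := (hTV k hk).ne
      exact ⟨p, fun _ => hp⟩
    · exact ⟨z, fun h => absurd h hk⟩
  choose p hp using hpt
  obtain ⟨v, m, hv⟩ := hrads 0 (Finset.mem_range.2 (by omega))
  have hlo0 := hTV 0 (Nat.zero_le _)
  simp only [pow_zero, div_one] at hv hlo0
  refine ⟨T 0, V 0, v, m, hlo0, hv, p 0, hp 0 (Nat.zero_le _), ?_⟩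
  have hsum : ∀ k ≤ n, qDelta μ 2 δ (p k) (p 0) ≤
      2 * CW * CD ^ (10 + 3 * l) * (5 * ∑ i ∈ Finset.range k, wt μ z (s0 / 2 ^ i)) := by
    intro k
    induction k with
    | zero => intro _; rw [qD_self]; exact zero_le
    | succ k ih =>
      intro hk
      obtain ⟨v', m', hv'⟩ := hrads k (Finset.mem_range.2 (by omega))
      have hhalf : s0 / 2 ^ (k + 1) = s0 / 2 ^ k / 2 := by rw [pow_succ, div_div]
      have hmono : s0 / 2 ^ n ≤ s0 / 2 ^ k := by gcongr; norm_num; omega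
      have hbk : 6 * lam * (s0 / 2 ^ k) ≤ dist z b := by nlinarith [hlsk k]
      have hj := join H (hTV (k + 1) hk) (hTV k (by omega)) hv' (hsk k) hhalf.ge
        (by rw [hhalf]; linarith [hsk k]) (by linarith [hsk k]) le_rfl hε
        (by linarith [hε1.2]) (by rw [dist_self]; positivity) hbk
        (by rw [dist_self]; positivity) hbk hεδ (hp (k + 1) hk) (hp k (by omega))
      have hw : wt μ z (s0 / 2 ^ (k + 1)) ≤ wt μ z (s0 / 2 ^ k) :=
        wt_mono (by rw [hhalf, dist_self]; linarith [hsk k])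
      have hj2 : qDelta μ 2 δ (p (k + 1)) (p k) ≤
          2 * CW * CD ^ (10 + 3 * l) * (5 * wt μ z (s0 / 2 ^ k)) := by
        refine hj.trans ?_
        refine mul_le_mul_right ?_ _
        calc _ ≤ 2 * wt μ z (s0 / 2 ^ k) + wt μ z (s0 / 2 ^ k) + 2 * wt μ z (s0 / 2 ^ k) := by
              gcongr
          _ = _ := by ring
      refine (qD_tri μ δ _ (p k) _).trans ((add_le_add hj2 (ih (by omega))).trans (le_of_eq ?_))
      rw [Finset.sum_range_succ]; ring
  have hlast : qDelta μ 2 δ z (p n) ≤ η := by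
    have hd := ((hTV n le_rfl).ring (p n) (hp n le_rfl)).2
    have h4 := hn.trans_le (min_le_left _ _)
    have h5 := hn.trans_le (min_le_right _ _)
    rw [qD_symm]
    refine (qD_hop μ (by linarith [hsk n])).trans ((pc_le_wt (R := r) (by linarith)).trans hwr.le)
  have htele := wt_tele H.hd H.hcon (z := z) (p := b) hs0 (by nlinarith) n
  refine (qD_tri μ δ z (p n) (p 0)).trans ?_
  rw [add_comm]
  refine add_le_add ((hsum n le_rfl).trans ?_) hlast
  gcongr
  exact le_self_add.trans htele

theorem assembly {X : Type*} [MetricSpace X] [MeasurableSpace X] [BorelSpace X]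
    {μ : Measure X} {CD CW : ℝ≥0}
    {lam : ℝ} {l : ℕ} {Kc : Set X} {b : X} (H : Ctx μ CD CW lam l Kc b) {x y : X} (hxy : x ≠ y)
    (hbx : closedBall x (72 * lam ^ 2 * dist x y) ⊆ Kc)
    (hby : closedBall y (72 * lam ^ 2 * dist x y) ⊆ Kc)
    (hx : 72 * lam ^ 2 * dist x y ≤ dist x b) (hy : 72 * lam ^ 2 * dist x y ≤ dist y b) :
    qmu μ 2 x y ≤ 16 * (CW : ℝ≥0∞) * (CD : ℝ≥0∞) ^ (28 + 16 * l) * pc μ x y := by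
  have hlam := H.hlam
  have hlam0 : 0 < lam := by linarith
  have hr : 0 < dist x y := dist_pos.2 hxy
  set r := dist x y with hrdef
  set s0 := 8 * lam * r with hs0def
  have hs0 : 0 < s0 := by positivity
  have hrs : r ≤ lam * r := le_mul_of_one_le_left hr.le hlam
  have h72 : 72 * lam ^ 2 * r = 9 * lam * s0 := by rw [hs0def]; ring
  rw [h72] at hbx hby hx hy
  set E : ℝ≥0∞ := 2 * CW * CD ^ (10 + 3 * l) with hE
  set P : ℝ≥0∞ := CD ^ (2 + l) * pc μ x y with hP
  have hC := H.one_le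
  have hC2 := two_le_CD H.hd H.hcon hxy
  have hwx0 : wt μ x r ≤ pc μ x y := wt_le_pc le_rfl
  have hpcpos : pc μ x y ≠ 0 := ((wt_pos H.hd x hr).trans_le hwx0).ne'
  have hE0 : E ≠ 0 := mul_ne_zero (mul_ne_zero two_ne_zero H.CW_ne) (pow_ne_zero _ H.CD_ne)
  have hP0 : P ≠ 0 := mul_ne_zero (pow_ne_zero _ H.CD_ne) hpcpos
  have hscale : ∀ z, dist z x ≤ r → wt μ z s0 ≤ P := by
    intro z hz
    have : wt μ z s0 ≤ CD ^ (2 + l) * wt μ x r := by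
      refine wt_le H.hd hr _ ?_
      have h4 := H.pow_le
      have : 9 * (lam * r) ≤ 4 ^ (2 + l) * r := by
        rw [pow_add, ← mul_assoc]
        gcongr
        norm_num
      rw [hs0def]
      linarith
    exact this.trans (by rw [hP]; gcongr)
  have hwx : wt μ x s0 ≤ P := hscale x (by rw [dist_self]; exact hr.le)
  have hwy : wt μ y s0 ≤ P := hscale y (by rw [dist_comm])
  refine qmu_le fun δ hδ => ?_
  have hη : 0 < E * P := by positivity
  have hsx := side H hs0 hbx hx hδ hη
  have hsy := side H hs0 hby hy hδ hη
  have he1 : ∀ᶠ ε in 𝓝[>] (0:ℝ), ε ∈ Ioo 0 (s0 / 8) := Ioo_mem_nhdsGT (by positivity)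
  have he2 : ∀ᶠ ε in 𝓝[>] (0:ℝ), ε ∈ Ioo 0 (δ / (4 * lam)) := Ioo_mem_nhdsGT (by positivity)
  obtain ⟨ε, ⟨Tx, Vx, vx, mx, lox, -, px, hpx, qx⟩, ⟨Ty, Vy, vy, my, loy, ray, py, hpy, qy⟩,
      hε1, hε2⟩ := (hsx.and (hsy.and (he1.and he2))).exists
  have hεδ : 4 * lam * ε ≤ δ := by
    have := hε2.2.le
    rw [le_div_iff₀ (by positivity)] at this
    linarith
  have hsr : s0 / (8 * lam) = r := by rw [hs0def]; field_simp
  have hls0 : 0 < lam * s0 := by positivity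
  have hj := join H lox loy ray hs0 (by linarith) le_rfl (by linarith) le_rfl hε1.1 hε1.2.le
    (by rw [hsr, dist_comm]) (by linarith) (by rw [dist_self]; positivity) (by linarith)
    hεδ hpx hpy
  rw [← hE] at hj qx qy
  have hj' : qDelta μ 2 δ px py ≤ E * (5 * P) := by
    refine hj.trans (mul_le_mul_right ?_ _)
    calc _ ≤ 2 * P + P + 2 * P := by gcongr
      _ = _ := by ring
  have qx' : qDelta μ 2 δ x px ≤ E * (5 * (2 * CD ^ 3 * P)) + E * P := qx.trans (by gcongr)
  have qy' : qDelta μ 2 δ py y ≤ E * (5 * (2 * CD ^ 3 * P)) + E * P := by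
    rw [qD_symm]; exact qy.trans (by gcongr)
  have hC3 : (1 : ℝ≥0∞) ≤ CD ^ 3 := one_le_pow₀ hC
  calc qDelta μ 2 δ x y ≤ (E * (5 * (2 * CD ^ 3 * P)) + E * P) + (E * (5 * P) +
        (E * (5 * (2 * CD ^ 3 * P)) + E * P)) :=
        (qD_tri μ δ x px y).trans (add_le_add qx' ((qD_tri μ δ px py y).trans
          (add_le_add hj' qy')))
    _ = E * P * (20 * CD ^ 3 + 7 * 1) := by ring
    _ ≤ E * P * (20 * CD ^ 3 + 12 * CD ^ 3) := by gcongr; norm_num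
    _ = 16 * CW * (2 * 2 * CD ^ (15 + 4 * l)) * pc μ x y := by rw [hE, hP]; ring
    _ ≤ 16 * CW * (CD ^ 3 * CD ^ 3 * CD ^ (15 + 4 * l)) * pc μ x y := by gcongr
    _ = 16 * CW * CD ^ (21 + 4 * l) * pc μ x y := by ring
    _ ≤ _ := mul_le_mul_left (mul_le_mul_right (pow_le_pow_right₀ hC (by omega)) _) _

theorem lam_le_ell {lam : ℝ} (h : 1 ≤ lam) : lam ≤ 2 ^ ellOf lam := by
  have h1 : Real.logb 2 lam ≤ (ellOf lam : ℝ) := by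
    refine (Int.le_ceil _).trans ?_
    have : Int.ceil (Real.logb 2 lam) ≤ ((ellOf lam : ℕ) : ℤ) := Int.self_le_toNat _
    exact_mod_cast this
  have h2 := (Real.logb_le_iff_le_rpow (by norm_num : (1 : ℝ) < 2) (by linarith)).1 h1
  rwa [Real.rpow_natCast] at h2

theorem statement2
    {X : Type*} [MetricSpace X] [MeasurableSpace X] [BorelSpace X]
    (lam : ℝ) (CD CW : ℝ≥0) (M : ℕ) (μ : Measure X)
    (hlam : 1 ≤ lam) (hLLC : IsLLC X lam)
    (hhom : ∃ Ω₀ : Set ↥Sphere2, IsCircleDomainS2 Ω₀ ∧ Nonempty (X ≃ₜ ↥Ω₀))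
    (hcpt : CompactSpace (Completion X))
    (hfin : (residComps X).Finite) (hM : (residComps X).ncard = M)
    (hreg : μ.Regular) (hdbl : IsDoublingWith μ CD) (hw : IsWMDM μ 2 CW) :
    ∀ x : X, ∃ rx : ℝ, 0 < rx ∧ ∀ y ∈ Metric.ball x rx,
      qmu μ 2 x y ≤ CSconst lam CD CW * μ (pairBall x y) ^ (1 / 2 : ℝ) := by
  intro x
  obtain ⟨ρ, hρ, b, hK, hb, hsep⟩ := exists_setup hhom x
  have hlam0 : 0 < lam := by linarith
  refine ⟨ρ / (100 * lam ^ 2), by positivity, fun y hy => ?_⟩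
  by_cases hxy : x = y
  · subst hxy
    refine (qmu_le (A := 0) fun δ _ => (qD_self μ δ x).le).trans zero_le
  have H : Ctx μ CD CW lam (ellOf lam) (closedBall x ρ) b :=
    ⟨hdbl, hw, hLLC, hlam, lam_le_ell hlam, hK, hsep, llc_preconn hLLC, x, y, hxy⟩
  rw [mem_ball, dist_comm, lt_div_iff₀ (by positivity)] at hy
  have hr : 0 < dist x y := dist_pos.2 hxy
  have hl2 : 1 * dist x y ≤ lam ^ 2 * dist x y := by
    gcongr
    exact one_le_pow₀ hlam
  refine assembly H hxy ?_ ?_ ?_ ?_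
  · exact closedBall_subset_closedBall (by linarith)
  · exact closedBall_subset_closedBall' (by linarith [dist_comm x y])
  · linarith
  · linarith [dist_triangle x y b]

end
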